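/- arXiv:2210.00711 — 4 statements merged into one kernel-verified Lean document; each statement's English description precedes it below -/
import Mathlib

section
/- Let R be a commutative noetherian ring, n ≥ 2, C an (n−1)-semidualizing finitely generated R-module, and x ∈ R a nonzerodivisor on R. Then C/xC is an (n−2)-semidualizing module over R/xR. -/
open CategoryTheory

/-- A finitely generated module `C` over a commutative ring `R` is `m`-semidualizing if the
natural homothety map `R → Hom_R(C,C)` is an isomorphism and `Ext^i_R(C,C) = 0` for
all `0 < i ≤ m`. -/
def IsSemidualizing (R : Type) [CommRing R] (C : Type) [AddCommGroup C] [Module R C]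
    (m : ℕ) : Prop :=
  Module.Finite R C ∧ Function.Bijective (LinearMap.lsmul R C) ∧
    ∀ i : ℕ, 0 < i → i ≤ m →
      Subsingleton (((Ext R (ModuleCat R) i).obj
        (Opposite.op (ModuleCat.of R C))).obj (ModuleCat.of R C))

/-!
Let `S = R ⧸ (x)`, where `x` is regular on `R` and on `M`. A resolution of `M` by free modules
stays exact after applying `S ⊗ -`, so `Extⁱ_S(M ⧸ xM, N) ≃ Extⁱ_R(M, N)` for every `S`-module `N`.
For `N = C ⧸ xC` the long exact sequence of `0 → C → C → C ⧸ xC → 0` makes the right-hand side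
vanish when `Extⁱ_R(M, C)` and `Extⁱ⁺¹_R(M, C)` do, and it lifts homomorphisms `C → C ⧸ xC` to
endomorphisms of `C`, which are homotheties. All this applies to `M = C`: as `x` is regular on
`R ≃ Hom(C, C)`, the kernel `K` of `x` on `C` satisfies `Hom(C, K) = 0`, and `K = 0` because `C` is
finitely generated and faithful.
-/

open Abelian Limits

universe w w' v v' u u'

section ProjectiveResolution

variable {A : Type u} [Category.{v} A] [Abelian A] {X : A}

theorem subsingleton_extFunctor_succ_iff (R : Type w) [Ring R] [Linear R A] [EnoughProjectives A]
    (P : ProjectiveResolution X) (Y : A) (i : ℕ) :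
    Subsingleton (((_root_.Ext R A (i + 1)).obj (.op X)).obj Y) ↔
      ∀ f : P.complex.X (i + 1) ⟶ Y, P.complex.d (i + 2) (i + 1) ≫ f = 0 →
        ∃ g : P.complex.X i ⟶ Y, P.complex.d (i + 1) i ≫ g = f := by
  rw [← ModuleCat.isZero_iff_subsingleton, (P.isoExt (i + 1) Y).isZero_iff,
    ← HomologicalComplex.exactAt_iff_isZero_homology,
    HomologicalComplex.exactAt_iff' _ i (i + 1) (i + 2) (by simp) (by simp),
    ShortComplex.moduleCat_exact_iff]
  rfl

theorem subsingleton_abelianExt_succ_iff [HasExt.{w} A]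
    (P : ProjectiveResolution X) (Y : A) (i : ℕ) :
    Subsingleton (Abelian.Ext X Y (i + 1)) ↔
      ∀ f : P.complex.X (i + 1) ⟶ Y, P.complex.d (i + 2) (i + 1) ≫ f = 0 →
        ∃ g : P.complex.X i ⟶ Y, P.complex.d (i + 1) i ≫ g = f := by
  refine ⟨fun _ f hf ↦ (P.extMk_eq_zero_iff f (i + 2) rfl hf i rfl).1 (Subsingleton.elim _ _),
    fun h ↦ subsingleton_of_forall_eq 0 fun α ↦ ?_⟩
  obtain ⟨f, hf, rfl⟩ := P.extMk_surjective α (i + 2) rfl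
  exact (P.extMk_eq_zero_iff f (i + 2) rfl hf i rfl).2 (h f hf)

theorem subsingleton_extFunctor_iff_subsingleton_abelianExt (R : Type w') [Ring R] [Linear R A]
    [EnoughProjectives A] [HasExt.{w} A] (X Y : A) {i : ℕ} (hi : i ≠ 0) :
    Subsingleton (((_root_.Ext R A i).obj (.op X)).obj Y) ↔ Subsingleton (Abelian.Ext X Y i) := by
  obtain ⟨i, rfl⟩ := Nat.exists_eq_succ_of_ne_zero hi
  rw [Nat.succ_eq_add_one, subsingleton_extFunctor_succ_iff R (projectiveResolution X),
    subsingleton_abelianExt_succ_iff (projectiveResolution X)]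

end ProjectiveResolution

section Adjunction

variable {A : Type u} [Category.{v} A] [Abelian A] [HasExt.{w} A]
  {B : Type u'} [Category.{v'} B] [Abelian B] [HasExt.{w'} B]
  {F : A ⥤ B} {G : B ⥤ A} [G.Additive] [PreservesFiniteLimits G] [PreservesFiniteColimits G]
  (adj : F ⊣ G)

/-- The map `Ext (F.obj X) Y n → Ext X (G.obj Y) n` applying an exact right adjoint `G` to an
extension and then pulling back along the unit; in degree `0` it is the bijection of the
adjunction. -/
noncomputable def extHomOfAdjunction (X : A) (Y : B) (n : ℕ) :
    Abelian.Ext (F.obj X) Y n →+ Abelian.Ext X (G.obj Y) n :=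
  ((Ext.mk₀ (adj.unit.app X)).precomp (G.obj Y) (zero_add n)).comp (G.mapExtAddHom (F.obj X) Y n)

theorem extHomOfAdjunction_apply {X : A} {Y : B} {n : ℕ} (α : Abelian.Ext (F.obj X) Y n) :
    extHomOfAdjunction adj X Y n α =
      (Ext.mk₀ (adj.unit.app X)).comp (α.mapExactFunctor G) (zero_add n) :=
  rfl

theorem extHomOfAdjunction_mk₀ {X : A} {Y : B} (f : F.obj X ⟶ Y) :
    extHomOfAdjunction adj X Y 0 (Ext.mk₀ f) = Ext.mk₀ (adj.homEquiv X Y f) := by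
  rw [extHomOfAdjunction_apply, Ext.mapExactFunctor_mk₀, Ext.mk₀_comp_mk₀, adj.homEquiv_unit]

theorem extHomOfAdjunction_zero_bijective (X : A) (Y : B) :
    Function.Bijective (extHomOfAdjunction adj X Y 0) := by
  rw [← Function.Bijective.of_comp_iff _ (Ext.mk₀_bijective _ _)]
  have : extHomOfAdjunction adj X Y 0 ∘ Ext.mk₀ = Ext.mk₀ ∘ adj.homEquiv X Y :=
    funext (extHomOfAdjunction_mk₀ adj)
  exact this ▸ (Ext.mk₀_bijective _ _).comp (adj.homEquiv X Y).bijective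

theorem extHomOfAdjunction_mk₀_comp {X X' : A} {Y : B} {n : ℕ} (f : X ⟶ X')
    (α : Abelian.Ext (F.obj X') Y n) :
    extHomOfAdjunction adj X Y n ((Ext.mk₀ (F.map f)).comp α (zero_add n)) =
      (Ext.mk₀ f).comp (extHomOfAdjunction adj X' Y n α) (zero_add n) := by
  simp only [extHomOfAdjunction_apply, Ext.mapExactFunctor_comp, Ext.mapExactFunctor_mk₀,
    Ext.mk₀_comp_mk₀_assoc]
  rw [← Functor.comp_map, ← adj.unit.naturality, Functor.id_map]

variable [F.PreservesZeroMorphisms]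

theorem extHomOfAdjunction_extClass_comp {S : ShortComplex A} (hS : S.ShortExact)
    (hFS : (S.map F).ShortExact) {Y : B} {n n' : ℕ} (h : 1 + n = n')
    (α : Abelian.Ext (S.map F).X₁ Y n) :
    extHomOfAdjunction adj S.X₃ Y n' (hFS.extClass.comp α h) =
      hS.extClass.comp (extHomOfAdjunction adj S.X₁ Y n α) h := by
  let η : S ⟶ (S.map F).map G :=
    { τ₁ := adj.unit.app S.X₁
      τ₂ := adj.unit.app S.X₂
      τ₃ := adj.unit.app S.X₃
      comm₁₂ := (adj.unit.naturality S.f).symm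
      comm₂₃ := (adj.unit.naturality S.g).symm }
  have hη := ShortComplex.ShortExact.extClass_naturality hS (hFS.map_of_exact G) η
  have hG : Ext.mapExactFunctor G (hFS.extClass.comp α h) =
      (hFS.map_of_exact G).extClass.comp (α.mapExactFunctor G) h := by
    rw [Ext.mapExactFunctor_comp, Ext.mapExactFunctor_extClass]
    rfl
  calc
    extHomOfAdjunction adj S.X₃ Y n' (hFS.extClass.comp α h)
    _ = (Ext.mk₀ η.τ₃).comp
          ((hFS.map_of_exact G).extClass.comp (α.mapExactFunctor G) h) (zero_add n') :=
        congrArg ((Ext.mk₀ η.τ₃).comp · (zero_add n')) hG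
    _ = ((Ext.mk₀ η.τ₃).comp (hFS.map_of_exact G).extClass (zero_add 1)).comp
          (α.mapExactFunctor G) h :=
        (Ext.comp_assoc _ _ _ _ _ (by lia)).symm
    _ = (hS.extClass.comp (Ext.mk₀ η.τ₁) (add_zero 1)).comp (α.mapExactFunctor G) h :=
        congrArg (Ext.comp · (α.mapExactFunctor G) h) hη.symm
    _ = hS.extClass.comp (extHomOfAdjunction adj S.X₁ Y n α) h :=
        Ext.comp_assoc_of_second_deg_zero _ _ _ h

attribute [local instance] Ext.subsingleton_of_projective in
theorem extHomOfAdjunction_succ_bijective {S : ShortComplex A} (hS : S.ShortExact)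
    (hFS : (S.map F).ShortExact) [Projective S.X₂] {Y : B} {n : ℕ}
    (h : Function.Bijective (extHomOfAdjunction adj S.X₁ Y n))
    (h₂ : Function.Surjective (extHomOfAdjunction adj S.X₂ Y n)) :
    Function.Bijective (extHomOfAdjunction adj S.X₃ Y (n + 1)) := by
  have : Projective (S.map F).X₂ := adj.map_projective S.X₂ inferInstance
  exact AddMonoidHom.bijective_of_surjective_of_bijective_of_right_exact _ _ _ _
    (extHomOfAdjunction adj S.X₂ Y n) (extHomOfAdjunction adj S.X₁ Y n)
    (extHomOfAdjunction adj S.X₃ Y (n + 1))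
    (AddMonoidHom.ext fun α ↦ (extHomOfAdjunction_mk₀_comp adj S.f α).symm)
    (AddMonoidHom.ext fun α ↦
      (extHomOfAdjunction_extClass_comp adj hS hFS (add_comm 1 n) α).symm)
    ((ShortComplex.ab_exact_iff_function_exact _).1
      (Ext.contravariant_sequence_exact₁' hFS Y n (n + 1) (add_comm 1 n)))
    ((ShortComplex.ab_exact_iff_function_exact _).1
      (Ext.contravariant_sequence_exact₁' hS (G.obj Y) n (n + 1) (add_comm 1 n)))
    h₂ h
    (fun x₃ ↦ Ext.contravariant_sequence_exact₃ hFS _ x₃ (by subsingleton) (add_comm 1 n))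
    (fun y₃ ↦ Ext.contravariant_sequence_exact₃ hS _ y₃ (by subsingleton) (add_comm 1 n))

end Adjunction

section ShortExact

variable {A : Type u} [Category.{v} A] [Abelian A] [HasExt.{w} A] {S : ShortComplex A}

theorem subsingleton_ext_X₃ (hS : S.ShortExact) (X : A) (n : ℕ)
    [Subsingleton (Abelian.Ext X S.X₂ n)] [Subsingleton (Abelian.Ext X S.X₁ (n + 1))] :
    Subsingleton (Abelian.Ext X S.X₃ n) := by
  refine subsingleton_of_forall_eq 0 fun α ↦ ?_
  obtain ⟨β, rfl⟩ := Ext.covariant_sequence_exact₃ X hS α rfl (Subsingleton.elim _ _)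
  rw [Subsingleton.elim β 0, Ext.zero_comp]

theorem exists_lift_of_subsingleton_ext_one (hS : S.ShortExact) {X : A}
    [Subsingleton (Abelian.Ext X S.X₁ 1)] (f : X ⟶ S.X₃) : ∃ g : X ⟶ S.X₂, g ≫ S.g = f := by
  obtain ⟨β, hβ⟩ := Ext.covariant_sequence_exact₃ X hS (Ext.mk₀ f) rfl (Subsingleton.elim _ _)
  obtain ⟨g, rfl⟩ := (Ext.mk₀_bijective _ _).surjective β
  exact ⟨g, (Ext.mk₀_bijective _ _).injective (by rw [← Ext.mk₀_comp_mk₀, hβ])⟩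

end ShortExact

section BaseChange

open scoped TensorProduct

variable {R : Type u} [CommRing R] {x : R}

theorem lTensor_quotient_span_singleton_injective {M₁ M₂ M₃ : Type*} [AddCommGroup M₁]
    [Module R M₁] [AddCommGroup M₂] [Module R M₂] [AddCommGroup M₃] [Module R M₃] {f : M₁ →ₗ[R] M₂}
    {g : M₂ →ₗ[R] M₃} (hf : Function.Injective f) (hfg : Function.Exact f g)
    (hx : IsSMulRegular M₃ x) :
    Function.Injective (f.lTensor (R ⧸ Ideal.span {x})) := by
  have hmap : Function.Injective (QuotSMulTop.map x f) := by
    have h := QuotSMulTop.map_first_exact_on_four_term_exact_of_isSMulRegular_last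
      ((LinearMap.exact_zero_iff_injective M₁ f).2 hf) hfg hx
    rwa [map_zero, LinearMap.exact_zero_iff_injective] at h
  have h : f.lTensor (R ⧸ Ideal.span {x}) ∘ QuotSMulTop.equivQuotTensor x M₁ =
      QuotSMulTop.equivQuotTensor x M₂ ∘ QuotSMulTop.map x f :=
    congrArg DFunLike.coe (QuotSMulTop.equivQuotTensor_naturality x f).symm
  rw [← EquivLike.injective_comp (QuotSMulTop.equivQuotTensor x M₁), h]
  exact (QuotSMulTop.equivQuotTensor x M₂).injective.comp hmap

theorem shortExact_map_extendScalars_quotient {S : ShortComplex (ModuleCat.{u} R)}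
    (hS : S.ShortExact) (hx : IsSMulRegular S.X₃ x) :
    (S.map (ModuleCat.extendScalars (Ideal.Quotient.mk (Ideal.span {x})))).ShortExact := by
  let F := ModuleCat.extendScalars.{u, u, u} (Ideal.Quotient.mk (Ideal.span {x}))
  have : F.IsLeftAdjoint := (ModuleCat.extendRestrictScalarsAdj _).isLeftAdjoint
  have := hS.epi_g
  exact
    { exact := hS.exact.map_of_epi_of_preservesCokernel F inferInstance inferInstance
      mono_f := (ModuleCat.mono_iff_injective _).2 <|
        lTensor_quotient_span_singleton_injective hS.moduleCat_injective_f
          ((ShortComplex.ShortExact.moduleCat_exact_iff_function_exact _).1 hS.exact) hx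
      epi_g := inferInstanceAs (Epi (F.map S.g)) }

theorem extHomOfAdjunction_extendScalars_quotient_bijective (hx : IsSMulRegular R x)
    {M : ModuleCat.{u} R} (hM : IsSMulRegular M x) (N : ModuleCat.{u} (R ⧸ Ideal.span {x}))
    (n : ℕ) :
    Function.Bijective (extHomOfAdjunction
      (ModuleCat.extendRestrictScalarsAdj (Ideal.Quotient.mk (Ideal.span {x}))) M N n) := by
  induction n generalizing M with
  | zero => exact extHomOfAdjunction_zero_bijective _ M N
  | succ n ih =>
    have hS := M.shortExact_projectiveShortComplex
    have hX₂ : IsSMulRegular M.projectiveShortComplex.X₂ x :=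
      (isLeftRegular_iff_isRegular.1 hx).isSMulRegular
    have hX₁ : IsSMulRegular M.projectiveShortComplex.X₁ x := hX₂.submodule _ _
    exact extHomOfAdjunction_succ_bijective _ hS (shortExact_map_extendScalars_quotient hS hM)
      (ih hX₁) (ih hX₂).surjective

/-- Reduction modulo `I` as a functor (`(R ⧸ I) ⊗ M`) agrees with the concrete quotient `M ⧸ IM`. -/
noncomputable def extendScalarsQuotientIso (I : Ideal R) (M : Type u) [AddCommGroup M]
    [Module R M] :
    (ModuleCat.extendScalars (Ideal.Quotient.mk I)).obj (ModuleCat.of R M) ≅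
      ModuleCat.of (R ⧸ I) (M ⧸ (I • ⊤ : Submodule R M)) :=
  letI e : (R ⧸ I) ⊗[R] M ≃ₗ[R ⧸ I] M ⧸ (I • ⊤ : Submodule R M) :=
    (TensorProduct.quotTensorEquivQuotSMul M I).extendScalarsOfSurjective
      Ideal.Quotient.mk_surjective
  e.toModuleIso

variable {M N : Type u} [AddCommGroup M] [Module R M] [AddCommGroup N] [Module R N]

theorem subsingleton_ext_quotient_smul_top_left_iff (hx : IsSMulRegular R x)
    (hM : IsSMulRegular M x) (Y : ModuleCat.{u} (R ⧸ Ideal.span {x})) (n : ℕ) :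
    Subsingleton (Abelian.Ext
        (ModuleCat.of (R ⧸ Ideal.span {x}) (M ⧸ (Ideal.span {x} • ⊤ : Submodule R M))) Y n) ↔
      Subsingleton (Abelian.Ext (ModuleCat.of R M)
        ((ModuleCat.restrictScalars (Ideal.Quotient.mk (Ideal.span {x}))).obj Y) n) :=
  let e := ((extFunctor n).mapIso (extendScalarsQuotientIso (Ideal.span {x}) M).op).app Y
  e.addCommGroupIsoToAddEquiv.subsingleton_congr.trans
    (Equiv.ofBijective _
      (extHomOfAdjunction_extendScalars_quotient_bijective hx hM Y n)).subsingleton_congr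

variable (N x) in
theorem exact_lsmul_mkQ_span_singleton_smul_top :
    Function.Exact (LinearMap.lsmul R N x)
      (Submodule.mkQ (Ideal.span {x} • ⊤ : Submodule R N)) := by
  rw [Submodule.ideal_span_singleton_smul]
  exact LinearMap.exact_lsmul_mkQ_smul_top N x

variable (N x) in
/-- The complex `N → N → N ⧸ xN` of multiplication by `x`. Unlike in `ModuleCat.smulShortComplex`,
the last term is the quotient by `Ideal.span {x} • ⊤`, which is a module over
`R ⧸ Ideal.span {x}`. -/
abbrev smulQuotientShortComplex : ShortComplex (ModuleCat.{u} R) :=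
  ModuleCat.shortComplexOfCompEqZero _ _
    (exact_lsmul_mkQ_span_singleton_smul_top x N).linearMap_comp_eq_zero

theorem shortExact_smulQuotientShortComplex (hN : IsSMulRegular N x) :
    (smulQuotientShortComplex x N).ShortExact :=
  ModuleCat.shortComplex_shortExact _ (exact_lsmul_mkQ_span_singleton_smul_top x N) hN
    (Submodule.mkQ_surjective _)

theorem subsingleton_ext_quotient_smul_top (hx : IsSMulRegular R x) (hM : IsSMulRegular M x)
    (hN : IsSMulRegular N x) (n : ℕ)
    [Subsingleton (Abelian.Ext (ModuleCat.of R M) (ModuleCat.of R N) n)]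
    [Subsingleton (Abelian.Ext (ModuleCat.of R M) (ModuleCat.of R N) (n + 1))] :
    Subsingleton (Abelian.Ext
      (ModuleCat.of (R ⧸ Ideal.span {x}) (M ⧸ (Ideal.span {x} • ⊤ : Submodule R M)))
      (ModuleCat.of (R ⧸ Ideal.span {x}) (N ⧸ (Ideal.span {x} • ⊤ : Submodule R N))) n) :=
  (subsingleton_ext_quotient_smul_top_left_iff hx hM _ n).2
    (subsingleton_ext_X₃ (shortExact_smulQuotientShortComplex hN) (ModuleCat.of R M) n)

theorem exists_mkQ_comp_eq_of_subsingleton_ext_one (hN : IsSMulRegular N x)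
    [Subsingleton (Abelian.Ext (ModuleCat.of R M) (ModuleCat.of R N) 1)]
    (φ : M →ₗ[R] N ⧸ (Ideal.span {x} • ⊤ : Submodule R N)) :
    ∃ ψ : M →ₗ[R] N, Submodule.mkQ _ ∘ₗ ψ = φ := by
  obtain ⟨ψ, hψ⟩ := exists_lift_of_subsingleton_ext_one
    (shortExact_smulQuotientShortComplex hN) (ModuleCat.ofHom φ)
  exact ⟨ψ.hom, congrArg ModuleCat.Hom.hom hψ⟩

end BaseChange

section Homothety

open scoped Pointwise

variable {R C : Type*} [CommRing R] [AddCommGroup C] [Module R C] {x : R}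

theorem isSMulRegular_of_isSMulRegular_linearMap [IsNoetherianRing R] [Module.Finite R C]
    [FaithfulSMul R C] {M : Type*} [AddCommGroup M] [Module R M] [Module.Finite R M]
    (hx : IsSMulRegular (C →ₗ[R] M) x) : IsSMulRegular M x := by
  let K := LinearMap.ker (LinearMap.lsmul R M x)
  have : Subsingleton (C →ₗ[R] K) := by
    refine subsingleton_of_forall_eq 0 fun φ ↦ ?_
    have : K.subtype ∘ₗ φ = 0 :=
      hx.right_eq_zero_of_smul (LinearMap.ext fun c ↦ (φ c).2)
    exact LinearMap.ext fun c ↦ Subtype.ext (LinearMap.congr_fun this c)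
  obtain ⟨r, hr, hrK⟩ := IsSMulRegular.subsingleton_linearMap_iff.1 this
  obtain rfl : r = 0 := by rwa [Module.annihilator_eq_bot.2 ‹_›] at hr
  have := hrK.subsingleton
  rw [isSMulRegular_iff_ker_lsmul_eq_bot]
  exact Submodule.subsingleton_iff_eq_bot.1 this

theorem isSMulRegular_of_lsmul_bijective [IsNoetherianRing R] [Module.Finite R C]
    (hC : Function.Bijective (LinearMap.lsmul R C)) (hx : IsSMulRegular R x) :
    IsSMulRegular C x := by
  have : FaithfulSMul R C := ⟨fun h ↦ hC.injective (LinearMap.ext h)⟩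
  exact isSMulRegular_of_isSMulRegular_linearMap
    (((LinearEquiv.ofBijective _ hC).isSMulRegular_congr x).1 hx)

theorem lsmul_quotient_smul_top_surjective (I : Ideal R)
    (hC : Function.Surjective (LinearMap.lsmul R C))
    (hlift : ∀ φ : C →ₗ[R] C ⧸ (I • ⊤ : Submodule R C),
      ∃ ψ : C →ₗ[R] C, Submodule.mkQ _ ∘ₗ ψ = φ) :
    Function.Surjective (LinearMap.lsmul (R ⧸ I) (C ⧸ (I • ⊤ : Submodule R C))) := by
  intro φ
  obtain ⟨ψ, hψ⟩ := hlift (φ.restrictScalars R ∘ₗ Submodule.mkQ _)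
  obtain ⟨r, rfl⟩ := hC ψ
  refine ⟨Ideal.Quotient.mk I r, LinearMap.ext fun c ↦ ?_⟩
  obtain ⟨c, rfl⟩ := Submodule.mkQ_surjective _ c
  exact LinearMap.congr_fun hψ c

theorem exists_eq_smul_of_forall_mem_smul_top {M N : Type*} [AddCommGroup M] [Module R M]
    [AddCommGroup N] [Module R N] (hx : IsSMulRegular N x) (f : M →ₗ[R] N)
    (hf : ∀ m, f m ∈ (x • ⊤ : Submodule R N)) : ∃ g : M →ₗ[R] N, f = x • g :=
  have hinj : Function.Injective (LinearMap.lsmul R N x) := hx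
  have h (m : M) : f m ∈ LinearMap.range (LinearMap.lsmul R N x) := by
    obtain ⟨n, -, hn⟩ := hf m
    exact ⟨n, hn⟩
  ⟨f.codRestrictOfInjective (LinearMap.lsmul R N x) hinj h,
    (LinearMap.codRestrictOfInjective_comp f _ hinj h).symm⟩

theorem lsmul_quotient_span_singleton_injective (hC : Function.Bijective (LinearMap.lsmul R C))
    (hx : IsSMulRegular C x) :
    Function.Injective (LinearMap.lsmul (R ⧸ Ideal.span {x})
      (C ⧸ (Ideal.span {x} • ⊤ : Submodule R C))) := by
  rw [injective_iff_map_eq_zero]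
  intro r hr
  obtain ⟨r, rfl⟩ := Ideal.Quotient.mk_surjective r
  have hmem (c : C) : LinearMap.lsmul R C r c ∈ (x • ⊤ : Submodule R C) := by
    rw [← Submodule.ideal_span_singleton_smul, ← Submodule.Quotient.mk_eq_zero]
    exact LinearMap.congr_fun hr (Submodule.Quotient.mk c)
  obtain ⟨ψ, hψ⟩ := exists_eq_smul_of_forall_mem_smul_top hx _ hmem
  obtain ⟨s, rfl⟩ := hC.surjective ψ
  rw [← map_smul, hC.injective.eq_iff] at hψ
  rw [Ideal.Quotient.eq_zero_iff_mem, Ideal.mem_span_singleton']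
  exact ⟨s, by rw [hψ, smul_eq_mul, mul_comm]⟩

end Homothety

theorem isSemidualizing_iff_subsingleton_abelianExt {R : Type} [CommRing R] {C : Type}
    [AddCommGroup C] [Module R C] {m : ℕ} :
    IsSemidualizing R C m ↔
      Module.Finite R C ∧ Function.Bijective (LinearMap.lsmul R C) ∧
        ∀ i, 0 < i → i ≤ m →
          Subsingleton (Abelian.Ext (ModuleCat.of R C) (ModuleCat.of R C) i) :=
  and_congr_right' <| and_congr_right' <| forall_congr' fun _ ↦ forall_congr' fun hi ↦
    imp_congr_right fun _ ↦
      subsingleton_extFunctor_iff_subsingleton_abelianExt R _ _ hi.ne'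

theorem quotient_isSemidualizing_of_isSemidualizing
    (R : Type) [CommRing R] [IsNoetherianRing R]
    (C : Type) [AddCommGroup C] [Module R C] [Module.Finite R C]
    (n : ℕ) (hn : 2 ≤ n)
    (hC : IsSemidualizing R C (n - 1))
    (x : R) (hx : IsSMulRegular R x) :
    IsSemidualizing (R ⧸ Ideal.span {x})
      (C ⧸ (Ideal.span {x} • ⊤ : Submodule R C)) (n - 2) := by
  obtain ⟨_, hbij, hext⟩ := isSemidualizing_iff_subsingleton_abelianExt.1 hC
  have hxC : IsSMulRegular C x := isSMulRegular_of_lsmul_bijective hbij hx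
  refine isSemidualizing_iff_subsingleton_abelianExt.2
    ⟨Module.Finite.of_restrictScalars_finite R _ _,
      ⟨lsmul_quotient_span_singleton_injective hbij hxC, ?_⟩, fun i hi hin ↦ ?_⟩
  · have := hext 1 one_pos (by lia)
    exact lsmul_quotient_smul_top_surjective _ hbij.surjective
      (exists_mkQ_comp_eq_of_subsingleton_ext_one hxC)
  · have := hext i hi (by lia)
    have := hext (i + 1) i.succ_pos (by lia)
    exact subsingleton_ext_quotient_smul_top hx hxC hxC i
end

section
/- Let R be a commutative noetherian ring and C an (n−1)-semidualizing finitely generated R-module with n ≥ 1. Then a sequence x_1, …, x_n of elements of R is a regular sequence on C if and only if it is a regular sequence on R. -/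
open CategoryTheory

/-!
Let `x` be a regular element on `M`. If `Ext^1(C, M) = 0`, then applying `Hom(C, -)` to
`0 → M → M → M/xM → 0` gives `Hom(C, M)/x Hom(C, M) ≃ Hom(C, M/xM)`, and the long exact sequence
passes the vanishing of `Ext^i(C, -)` on from `M` to `M/xM` with the loss of one degree. So a
sequence can be tested for weak regularity on `M` and on `Hom(C, M)` one element at a time: `x` is
regular on `M` if and only if it is regular on `Hom(C, M)`, because over a noetherian ring
`Hom(C, K) = 0` forces `K = 0` as soon as `Supp K ⊆ Supp C`. For the same reason `M` and
`Hom(C, M)` have equal supports, so that `IM = M` if and only if `I Hom(C, M) = Hom(C, M)`.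
A semidualizing module is the case `M = C`, where `Hom(C, C) ≃ R`.
-/

universe u v

open Pointwise RingTheory.Sequence

section Abelian

universe w

variable {A : Type u} [Category.{v} A] [Abelian A] [HasExt.{w} A]

theorem subsingleton_abelianExt_succ_of_subsingleton_ext {k : Type*} [Ring k] [Linear k A]
    [EnoughProjectives A] {X Y : A} {n : ℕ}
    (h : Subsingleton (((Ext k A (n + 1)).obj (Opposite.op X)).obj Y)) :
    Subsingleton (Abelian.Ext X Y (n + 1)) := by
  let P := projectiveResolution X
  have hP : (P.complex.linearYonedaObj k Y).ExactAt (n + 1) := by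
    rw [HomologicalComplex.exactAt_iff_isZero_homology]
    exact (ModuleCat.isZero_of_subsingleton _).of_iso (P.isoExt (n + 1) Y).symm
  rw [HomologicalComplex.exactAt_iff' _ n (n + 1) (n + 2) (by simp) (by simp),
    ShortComplex.moduleCat_exact_iff] at hP
  refine subsingleton_of_forall_eq 0 fun α => ?_
  obtain ⟨φ, hφ, rfl⟩ := P.extMk_surjective α (n + 2) rfl
  exact (P.extMk_eq_zero_iff φ (n + 2) rfl hφ n rfl).2 (hP φ hφ)

theorem subsingleton_ext_X₃_of_shortExact {X : A} {S : ShortComplex A}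
    (hS : S.ShortExact) {i : ℕ} (h₂ : Subsingleton (Abelian.Ext X S.X₂ i))
    (h₁ : Subsingleton (Abelian.Ext X S.X₁ (i + 1))) : Subsingleton (Abelian.Ext X S.X₃ i) := by
  refine subsingleton_of_forall_eq 0 fun α => ?_
  obtain ⟨β, rfl⟩ := Abelian.Ext.covariant_sequence_exact₃ X hS α rfl (Subsingleton.elim _ 0)
  rw [Subsingleton.elim β 0, Abelian.Ext.zero_comp]

theorem exists_comp_eq_of_shortExact_of_subsingleton_ext {X : A} {S : ShortComplex A}
    (hS : S.ShortExact) (h₁ : Subsingleton (Abelian.Ext X S.X₁ 1)) (f : X ⟶ S.X₃) :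
    ∃ g : X ⟶ S.X₂, g ≫ S.g = f := by
  obtain ⟨β, hβ⟩ := Abelian.Ext.covariant_sequence_exact₃ X hS (Abelian.Ext.mk₀ f) (zero_add 1)
    (Subsingleton.elim _ 0)
  obtain ⟨g, rfl⟩ := (Abelian.Ext.mk₀_bijective X S.X₂).2 β
  rw [Abelian.Ext.mk₀_comp_mk₀] at hβ
  exact ⟨g, (Abelian.Ext.mk₀_bijective X S.X₃).1 hβ⟩

end Abelian

section Hom

variable {R : Type*} [CommRing R] {C M N P : Type*} [AddCommGroup C] [Module R C]
  [AddCommGroup M] [Module R M] [AddCommGroup N] [Module R N] [AddCommGroup P] [Module R P]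

theorem exact_compRight_of_exact_of_injective {f : M →ₗ[R] N} {g : N →ₗ[R] P}
    (hfg : Function.Exact f g) (hf : Function.Injective f) :
    Function.Exact (LinearMap.compRight R f : (C →ₗ[R] M) →ₗ[R] C →ₗ[R] N)
      (LinearMap.compRight R g) := by
  refine fun h => ⟨fun hgh => ?_, ?_⟩
  · have hrange : ∀ c, h c ∈ LinearMap.range f := fun c => (hfg _).1 (LinearMap.congr_fun hgh c)
    refine ⟨(LinearEquiv.ofInjective f hf).symm ∘ₗ h.codRestrict _ hrange, ?_⟩
    ext c
    exact congrArg Subtype.val ((LinearEquiv.ofInjective f hf).apply_symm_apply ⟨h c, hrange c⟩)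
  · rintro ⟨h', rfl⟩
    ext c
    exact hfg.apply_apply_eq_zero (h' c)

theorem isSMulRegular_linearMap {x : R} (hx : IsSMulRegular M x) :
    IsSMulRegular (C →ₗ[R] M) x :=
  fun _ _ hfg => LinearMap.ext fun c => hx (LinearMap.congr_fun hfg c)

theorem range_compRight_lsmul (x : R) :
    LinearMap.range (LinearMap.compRight R (LinearMap.lsmul R M x) : (C →ₗ[R] M) →ₗ[R] _) =
      x • ⊤ :=
  (LinearMap.exact_lsmul_mkQ_smul_top (C →ₗ[R] M) x).linearMap_ker_eq.symm.trans
    (Submodule.ker_mkQ _)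

/-- The isomorphism `Hom(C, M)/x Hom(C, M) ≃ Hom(C, M/xM)` for an `M`-regular element `x` such that
every map `C → M/xM` lifts to `M`. It lets induction on a sequence commute with `Hom(C, -)`. -/
noncomputable def quotSMulTopLinearMapEquiv {x : R} (hx : IsSMulRegular M x)
    (hlift : Function.Surjective
      (LinearMap.compRight R (x • ⊤ : Submodule R M).mkQ : (C →ₗ[R] M) →ₗ[R] _)) :
    QuotSMulTop x (C →ₗ[R] M) ≃ₗ[R] (C →ₗ[R] QuotSMulTop x M) :=
  Submodule.quotEquivOfEq _ _ (range_compRight_lsmul x).symm ≪≫ₗ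
    (exact_compRight_of_exact_of_injective
      (LinearMap.exact_lsmul_mkQ_smul_top M x) hx).linearEquivOfSurjective hlift

variable [IsNoetherianRing R] [Module.Finite R C] [Module.Finite R M]

theorem subsingleton_of_subsingleton_linearMap
    (hsupp : Module.support R M ⊆ Module.support R C) (h : Subsingleton (C →ₗ[R] M)) :
    Subsingleton M := by
  obtain ⟨r, hrC, hr⟩ := IsSMulRegular.subsingleton_linearMap_iff.1 h
  rw [Module.support_eq_zeroLocus, Module.support_eq_zeroLocus,
    PrimeSpectrum.zeroLocus_subset_zeroLocus_iff] at hsupp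
  obtain ⟨k, hk⟩ := hsupp hrC
  refine subsingleton_of_forall_eq 0 fun m => (hr.pow k).right_eq_zero_of_smul ?_
  exact Module.mem_annihilator.1 hk m

theorem isSMulRegular_linearMap_iff (hsupp : Module.support R M ⊆ Module.support R C) {x : R} :
    IsSMulRegular (C →ₗ[R] M) x ↔ IsSMulRegular M x := by
  refine ⟨fun h => ?_, isSMulRegular_linearMap⟩
  let K := LinearMap.ker (LinearMap.lsmul R M x)
  have hHom : Subsingleton (C →ₗ[R] K) := subsingleton_of_forall_eq 0 fun f => by
    have hf : K.subtype ∘ₗ f = 0 :=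
      h.right_eq_zero_of_smul (LinearMap.ext fun c => (f c).2)
    exact LinearMap.ext fun c => Subtype.ext (LinearMap.congr_fun hf c)
  have hK : Subsingleton K := subsingleton_of_subsingleton_linearMap
    ((Module.support_subset_of_injective K.subtype K.injective_subtype).trans hsupp) hHom
  exact isSMulRegular_of_ker_lsmul_eq_bot (Submodule.subsingleton_iff_eq_bot.1 hK)

theorem annihilator_linearMap_le_radical (hsupp : Module.support R M ⊆ Module.support R C) :
    Module.annihilator R (C →ₗ[R] M) ≤ (Module.annihilator R M).radical := by
  intro r hr
  -- `r ^ n M` has no `r`-torsion, yet every map from `C` to it is killed by `r`.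
  obtain ⟨n, hdisj, hn⟩ := ((Module.End.eventually_disjoint_ker_pow_range_pow
    (Algebra.lsmul R R M r)).and (Filter.eventually_ge_atTop 1)).exists
  set K := LinearMap.range (Algebra.lsmul R R M r ^ n)
  have hHom : Subsingleton (C →ₗ[R] K) := subsingleton_of_forall_eq 0 fun f => by
    ext c
    have hrf : r • (f c : M) = 0 :=
      LinearMap.congr_fun (Module.mem_annihilator.1 hr (K.subtype ∘ₗ f)) c
    refine Submodule.disjoint_def.1 hdisj _ ?_ (f c).2
    exact Module.End.pow_map_zero_of_le hn (by simpa using hrf)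
  have hK : Subsingleton K := subsingleton_of_subsingleton_linearMap
    ((Module.support_subset_of_injective K.subtype K.injective_subtype).trans hsupp) hHom
  refine ⟨n, Module.mem_annihilator.2 fun m => ?_⟩
  have hpow : Algebra.lsmul R R M r ^ n = 0 :=
    LinearMap.range_eq_bot.1 (Submodule.subsingleton_iff_eq_bot.1 hK)
  rw [← map_pow] at hpow
  exact LinearMap.congr_fun hpow m

theorem support_linearMap_eq (hsupp : Module.support R M ⊆ Module.support R C) :
    Module.support R (C →ₗ[R] M) = Module.support R M := by
  rw [Module.support_eq_zeroLocus, Module.support_eq_zeroLocus]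
  refine PrimeSpectrum.zeroLocus_eq_iff.2 (le_antisymm ?_ (Ideal.radical_mono ?_))
  · exact Ideal.radical_le_radical_iff.2 (annihilator_linearMap_le_radical hsupp)
  · exact fun r hr => Module.mem_annihilator.2 fun f =>
      LinearMap.ext fun c => Module.mem_annihilator.1 hr (f c)

end Hom

theorem smul_top_eq_top_iff_disjoint_support {R M : Type*} [CommRing R] [AddCommGroup M]
    [Module R M] [Module.Finite R M] (I : Ideal R) :
    I • (⊤ : Submodule R M) = ⊤ ↔ Disjoint (Module.support R M) (PrimeSpectrum.zeroLocus I) := by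
  rw [← Submodule.Quotient.subsingleton_iff, ← Module.support_eq_empty_iff (R := R),
    Module.support_quotient, Set.disjoint_iff_inter_eq_empty]

section Sequence

variable {R : Type u} [CommRing R] [Small.{v} R] {C M : Type v}
  [AddCommGroup C] [Module R C] [AddCommGroup M] [Module R M]

theorem subsingleton_ext_quotSMulTop {X : ModuleCat.{v} R} {x : R} (hx : IsSMulRegular M x) {i : ℕ}
    (h : Subsingleton (Abelian.Ext X (ModuleCat.of R M) i))
    (h' : Subsingleton (Abelian.Ext X (ModuleCat.of R M) (i + 1))) :
    Subsingleton (Abelian.Ext X (ModuleCat.of R (QuotSMulTop x M)) i) :=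
  subsingleton_ext_X₃_of_shortExact
    (IsSMulRegular.smulShortComplex_shortExact (M := ModuleCat.of R M) hx) h h'

theorem compRight_mkQ_surjective {x : R} (hx : IsSMulRegular M x)
    (hExt : Subsingleton (Abelian.Ext (ModuleCat.of R C) (ModuleCat.of R M) 1)) :
    Function.Surjective
      (LinearMap.compRight R (x • ⊤ : Submodule R M).mkQ : (C →ₗ[R] M) →ₗ[R] _) := by
  intro f
  obtain ⟨g, hg⟩ := exists_comp_eq_of_shortExact_of_subsingleton_ext
    (IsSMulRegular.smulShortComplex_shortExact (M := ModuleCat.of R M) hx) hExt (ModuleCat.ofHom f)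
  exact ⟨g.hom, congrArg ModuleCat.Hom.hom hg⟩

variable [IsNoetherianRing R] [Module.Finite R C]

theorem isWeaklyRegular_linearMap_iff [Module.Finite R M]
    (hsupp : Module.support R M ⊆ Module.support R C) (xs : List R)
    (hExt : ∀ i, 0 < i → i < xs.length →
      Subsingleton (Abelian.Ext (ModuleCat.of R C) (ModuleCat.of R M) i)) :
    IsWeaklyRegular (C →ₗ[R] M) xs ↔ IsWeaklyRegular M xs := by
  induction xs generalizing M with
  | nil => simp only [IsWeaklyRegular.nil]
  | cons x xs ih =>
    rw [isWeaklyRegular_cons_iff, isWeaklyRegular_cons_iff, isSMulRegular_linearMap_iff hsupp]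
    refine and_congr_right fun hx => ?_
    rcases eq_or_ne xs [] with rfl | hxs
    · simp only [IsWeaklyRegular.nil]
    have hpos : 0 < xs.length := List.length_pos_iff.2 hxs
    have hlift := compRight_mkQ_surjective hx (hExt 1 one_pos (Nat.succ_lt_succ hpos))
    rw [(quotSMulTopLinearMapEquiv hx hlift).isWeaklyRegular_congr]
    refine ih ((Module.support_subset_of_surjective _ (Submodule.mkQ_surjective _)).trans hsupp)
      fun i hi hlt => ?_
    exact subsingleton_ext_quotSMulTop hx
      (hExt i hi (Nat.lt_succ_of_lt hlt)) (hExt (i + 1) i.succ_pos (Nat.succ_lt_succ hlt))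

theorem isRegular_iff_isRegular_of_isSemidualizing_general [Module.Finite R M]
    (hsupp : Module.support R M ⊆ Module.support R C) (xs : List R)
    (hExt : ∀ i, 0 < i → i < xs.length →
      Subsingleton (Abelian.Ext (ModuleCat.of R C) (ModuleCat.of R M) i)) :
    IsRegular M xs ↔ IsRegular (C →ₗ[R] M) xs := by
  simp only [isRegular_iff, isWeaklyRegular_linearMap_iff hsupp xs hExt, ne_eq, eq_comm (a := ⊤),
    smul_top_eq_top_iff_disjoint_support, support_linearMap_eq hsupp]

end Sequence

theorem isRegular_iff_isRegular_of_isSemidualizing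
    (R : Type) [CommRing R] [IsNoetherianRing R]
    (C : Type) [AddCommGroup C] [Module R C] [Module.Finite R C]
    (n : ℕ) (hn : 1 ≤ n)
    (hC : IsSemidualizing R C (n - 1))
    (xs : List R) (hlen : xs.length = n) :
    RingTheory.Sequence.IsRegular C xs ↔ RingTheory.Sequence.IsRegular R xs := by
  obtain ⟨-, hbij, hExt⟩ := hC
  have hExt' : ∀ i, 0 < i → i < xs.length →
      Subsingleton (Abelian.Ext (ModuleCat.of R C) (ModuleCat.of R C) i)
    | i + 1, hpos, hlt => subsingleton_abelianExt_succ_of_subsingleton_ext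
        (hExt (i + 1) hpos (by lia))
  exact (isRegular_iff_isRegular_of_isSemidualizing_general subset_rfl xs hExt').trans
    ((LinearEquiv.ofBijective _ hbij).isRegular_congr xs).symm
end

section
/- Let R be a noetherian normal domain and C a finitely generated R-module that is 1-semidualizing, i.e., Hom_R(C,C) ≅ R and Ext^1_R(C,C) = 0. Then C is a reflexive R-module (the natural map C → Hom_R(Hom_R(C,R),R) is an isomorphism) of rank 1. -/
open CategoryTheory
open scoped TensorProduct

/-!
Since every endomorphism of `C` is a homothety, comparing `φ.smulRight c` with a homothety gives
`φ d • c = φ c • d` for every functional `φ`. Hence a nonzero functional embeds `C` into `R`, so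
`C` has rank one, and `x = φ c` multiplies `C**` into the image of `C`.

Let `Q` be the cokernel of `C → C**`. As `C` is finitely generated and faithful, `Q` vanishes as
soon as `Hom(C, Q) = 0`. By `Ext¹(C, C) = 0` a map `g : C → Q` lifts to `k : C → C**`. Now `x k`
lands in the image of `C`, so it is `c ↦ a c` for some `a : R`, and the transpose of `k` is an
endomorphism of `C*` which is multiplication by `a / x`. By normality `x` divides `a`, so `k` takes
values in the image of `C` and `g = 0`.
-/

namespace OneSemidualizing

universe u v w

section Homothety

variable {R M N : Type*} [CommRing R] [AddCommGroup M] [Module R M] [AddCommGroup N] [Module R N]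

lemma subsingleton_of_subsingleton_linearMap [IsNoetherianRing R] [Module.Finite R M]
    [FaithfulSMul R M] [Module.Finite R N] (h : Subsingleton (M →ₗ[R] N)) : Subsingleton N := by
  obtain ⟨r, hr, hreg⟩ := IsSMulRegular.subsingleton_linearMap_iff.mp h
  rw [Module.annihilator_eq_bot.mpr ‹_›, Ideal.mem_bot] at hr
  exact IsSMulRegular.zero_iff_subsingleton.mp (hr ▸ hreg)

lemma faithfulSMul_of_injective_lsmul (h : Function.Injective (LinearMap.lsmul R M)) :
    FaithfulSMul R M :=
  ⟨fun hrs ↦ h (LinearMap.ext hrs)⟩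

lemma subsingleton_linearMap_torsionBy (h : Function.Bijective (LinearMap.lsmul R M)) {r : R}
    (hr : r ∈ nonZeroDivisors R) : Subsingleton (M →ₗ[R] Submodule.torsionBy R M r) := by
  refine subsingleton_of_forall_eq 0 fun f ↦ ?_
  obtain ⟨a, ha⟩ := h.surjective ((Submodule.torsionBy R M r).subtype ∘ₗ f)
  have hra : r * a = 0 := h.injective <| by
    ext m
    simpa [mul_smul] using congr(r • $ha m)
  obtain rfl : a = 0 := (mul_left_mem_nonZeroDivisors_eq_zero_iff hr).mp hra
  ext m
  simpa using congr($ha m).symm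

lemma isTorsionFree_of_bijective_lsmul [IsNoetherianRing R] [Module.Finite R M]
    (h : Function.Bijective (LinearMap.lsmul R M)) : Module.IsTorsionFree R M where
  isSMulRegular r hr := by
    have := faithfulSMul_of_injective_lsmul h.injective
    have := subsingleton_of_subsingleton_linearMap
      (subsingleton_linearMap_torsionBy h hr.mem_nonZeroDivisors)
    exact (isSMulRegular_iff_torsionBy_eq_bot M r).mpr
      (Submodule.subsingleton_iff_eq_bot.mp this)

lemma nontrivial_dual_of_injective_lsmul [Nontrivial R] [IsNoetherianRing R]
    [Module.Finite R M] (h : Function.Injective (LinearMap.lsmul R M)) :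
    Nontrivial (Module.Dual R M) := by
  have := faithfulSMul_of_injective_lsmul h
  by_contra hdual
  exact not_subsingleton R
    (subsingleton_of_subsingleton_linearMap (not_nontrivial_iff_subsingleton.mp hdual))

end Homothety

section Rank

lemma rank_fractionRing_tensorProduct (R : Type u) (M : Type v) [CommRing R] [AddCommGroup M]
    [Module R M] : Module.rank (FractionRing R) (FractionRing R ⊗[R] M) =
      Cardinal.lift.{u} (Module.rank R M) := by
  rw [IsLocalization.rank_eq _ (nonZeroDivisors R) le_rfl,
    ← Cardinal.lift_id'.{v, u} (Module.rank ..),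
    IsLocalizedModule.lift_rank_eq (nonZeroDivisors R)
      (TensorProduct.mk R (FractionRing R) M 1) le_rfl, Cardinal.lift_umax.{v, u}]

variable {R M : Type*} [CommRing R] [IsDomain R] [AddCommGroup M] [Module R M]

lemma rank_eq_one_of_injective_dual [Nontrivial M] {φ : Module.Dual R M}
    (hφ : Function.Injective φ) : Module.rank R M = 1 := by
  have := hφ.moduleIsTorsionFree φ (map_smul φ)
  refine le_antisymm ?_ (Cardinal.one_le_iff_pos.mpr rank_pos)
  simpa using LinearMap.lift_rank_le_of_injective φ hφ

lemma dual_apply_smul_comm (h : Function.Surjective (LinearMap.lsmul R M)) (φ : Module.Dual R M)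
    (m n : M) : φ n • m = φ m • n := by
  obtain rfl | hφ := eq_or_ne φ 0
  · simp
  obtain ⟨k, hk⟩ := DFunLike.ne_iff.mp hφ
  obtain ⟨a, ha⟩ := h (φ.smulRight m)
  have ha (n : M) : a • n = φ n • m := LinearMap.congr_fun ha n
  have haφ : a = φ m := mul_right_cancel₀ hk <| by simpa [mul_comm (φ m)] using congr(φ $(ha k))
  rw [← ha, haφ]

lemma dual_injective_of_ne_zero [Module.IsTorsionFree R M]
    (h : Function.Surjective (LinearMap.lsmul R M)) {φ : Module.Dual R M} (hφ : φ ≠ 0) :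
    Function.Injective φ := by
  obtain ⟨k, hk⟩ := DFunLike.ne_iff.mp hφ
  refine (injective_iff_map_eq_zero φ).mpr fun m hm ↦ ?_
  have hkm : φ k • m = 0 := by rw [dual_apply_smul_comm h, hm, zero_smul]
  exact (smul_eq_zero_iff_right hk).mp hkm

lemma rank_eq_one_of_bijective_lsmul [IsNoetherianRing R] [Module.Finite R M]
    (h : Function.Bijective (LinearMap.lsmul R M)) : Module.rank R M = 1 := by
  have := isTorsionFree_of_bijective_lsmul h
  have := nontrivial_dual_of_injective_lsmul h.injective
  obtain ⟨φ, hφ⟩ := exists_ne (0 : Module.Dual R M)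
  obtain ⟨m, hm⟩ := DFunLike.ne_iff.mp hφ
  have : Nontrivial M := nontrivial_of_ne m 0 fun hm0 ↦ hm (by simp [hm0])
  exact rank_eq_one_of_injective_dual (dual_injective_of_ne_zero h.surjective hφ)

end Rank

section Normal

variable {R M : Type*} [CommRing R] [IsDomain R] [IsNoetherianRing R] [IsIntegrallyClosed R]
  [AddCommGroup M] [Module R M]

lemma dvd_of_forall_pow_dvd {a x r : R} (hx : x ≠ 0) (hr : r ≠ 0)
    (h : ∀ n : ℕ, x ^ n ∣ a ^ n * r) : x ∣ a := by
  let K := FractionRing R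
  have hxK : algebraMap R K x ≠ 0 := by simpa using hx
  have hint : IsAlmostIntegral R (algebraMap R K a / algebraMap R K x) := by
    refine ⟨r, mem_nonZeroDivisors_of_ne_zero hr, fun n ↦ ?_⟩
    obtain ⟨b, hb⟩ := h n
    refine ⟨b, ?_⟩
    rw [Algebra.smul_def, div_pow, ← mul_div_assoc, eq_div_iff (pow_ne_zero n hxK)]
    simpa [mul_comm] using congr(algebraMap R K $hb).symm
  obtain ⟨y, hy⟩ := IsIntegrallyClosed.isIntegral_iff.mp hint.isIntegral
  refine ⟨y, IsFractionRing.injective R K ?_⟩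
  rw [map_mul, hy, mul_div_cancel₀ _ hxK]

lemma dvd_of_smul_end_eq [Nontrivial (Module.Dual R M)] {a x : R} (hx : x ≠ 0)
    {T : Module.End R M} (hT : x • T = a • 1) : x ∣ a := by
  obtain ⟨φ, hφ⟩ := exists_ne (0 : Module.Dual R M)
  obtain ⟨m, hm⟩ := DFunLike.ne_iff.mp hφ
  refine dvd_of_forall_pow_dvd hx hm fun n ↦ ⟨φ ((T ^ n) m), ?_⟩
  have hpow : x ^ n • T ^ n = a ^ n • 1 := by rw [← smul_pow, hT, smul_pow, one_pow]
  simpa using congr(φ ($hpow m)).symm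

end Normal

section Biduality

variable {R M : Type*} [CommRing R] [IsDomain R] [AddCommGroup M] [Module R M]

lemma dual_apply_smul_eq_eval (h : Function.Surjective (LinearMap.lsmul R M))
    (φ : Module.Dual R M) (m : M) (y : Module.Dual R (Module.Dual R M)) :
    φ m • y = Module.Dual.eval R M (y φ • m) := by
  ext ψ
  have hψ : φ m • ψ = ψ m • φ := by
    ext n
    simpa [mul_comm] using congr(ψ $(dual_apply_smul_comm h φ n m))
  simpa [mul_comm] using congr(y $hψ)

lemma range_le_range_eval [IsNoetherianRing R] [IsIntegrallyClosed R]
    [Nontrivial (Module.Dual R M)] (h : Function.Surjective (LinearMap.lsmul R M))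
    (k : M →ₗ[R] Module.Dual R (Module.Dual R M)) :
    LinearMap.range k ≤ LinearMap.range (Module.Dual.eval R M) := by
  obtain ⟨φ, hφ⟩ := exists_ne (0 : Module.Dual R M)
  obtain ⟨c, hc⟩ := DFunLike.ne_iff.mp hφ
  have : Nontrivial (Module.Dual R (Module.Dual R M)) :=
    nontrivial_of_ne (Module.Dual.eval R M c) 0 fun hc0 ↦ hc congr($hc0 φ)
  obtain ⟨a, ha⟩ := h ((k.flip φ).smulRight c)
  have hk (m : M) : φ c • k m = Module.Dual.eval R M (a • m) := by
    rw [dual_apply_smul_eq_eval h]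
    exact congr(Module.Dual.eval R M ($ha m)).symm
  have hflip : φ c • k.flip = a • (1 : Module.End R (Module.Dual R M)) := by
    ext ψ m
    simpa using congr($(hk m) ψ)
  obtain ⟨b, rfl⟩ := dvd_of_smul_end_eq hc hflip
  rintro _ ⟨m, rfl⟩
  refine ⟨b • m, smul_right_injective _ hc ?_⟩
  simp only [hk, mul_smul, map_smul]

lemma eval_injective_of_bijective_lsmul [IsNoetherianRing R] [Module.Finite R M]
    (h : Function.Bijective (LinearMap.lsmul R M)) :
    Function.Injective (Module.Dual.eval R M) := by
  have := isTorsionFree_of_bijective_lsmul h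
  have := nontrivial_dual_of_injective_lsmul h.injective
  obtain ⟨φ, hφ⟩ := exists_ne (0 : Module.Dual R M)
  exact fun m n hmn ↦ dual_injective_of_ne_zero h.surjective hφ congr($hmn φ)

theorem isReflexive_of_forall_exists_lift [IsNoetherianRing R] [IsIntegrallyClosed R]
    [Module.Finite R M] (h : Function.Bijective (LinearMap.lsmul R M))
    (hlift : ∀ g : M →ₗ[R] _ ⧸ LinearMap.range (Module.Dual.eval R M),
      ∃ k, (LinearMap.range (Module.Dual.eval R M)).mkQ ∘ₗ k = g) : Module.IsReflexive R M := by
  have := faithfulSMul_of_injective_lsmul h.injective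
  have := nontrivial_dual_of_injective_lsmul h.injective
  refine ⟨eval_injective_of_bijective_lsmul h, ?_⟩
  have hzero : Subsingleton (M →ₗ[R] _ ⧸ LinearMap.range (Module.Dual.eval R M)) := by
    refine subsingleton_of_forall_eq 0 fun g ↦ ?_
    obtain ⟨k, rfl⟩ := hlift g
    exact LinearMap.range_le_ker_iff.mp <|
      (range_le_range_eval h.surjective k).trans_eq (Submodule.ker_mkQ _).symm
  exact LinearMap.range_eq_top.mp <|
    Submodule.Quotient.subsingleton_iff.mp (subsingleton_of_subsingleton_linearMap hzero)

end Biduality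

section Ext

lemma subsingleton_abelianExt_succ {A R : Type*} [Ring R] [Category* A] [Abelian A] [Linear R A]
    [EnoughProjectives A] [HasExt.{w} A] {X Y : A} {n : ℕ}
    (h : Subsingleton (((Ext R A (n + 1)).obj (.op X)).obj Y)) :
    Subsingleton (Abelian.Ext X Y (n + 1)) := by
  let P := projectiveResolution X
  have hexact := (ModuleCat.isZero_of_subsingleton _).of_iso (P.isoExt (R := R) (n + 1) Y).symm
  rw [← HomologicalComplex.exactAt_iff_isZero_homology,
    HomologicalComplex.exactAt_iff' _ n (n + 1) (n + 2) (by simp) (by simp),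
    ShortComplex.moduleCat_exact_iff] at hexact
  refine subsingleton_of_forall_eq 0 fun α ↦ ?_
  obtain ⟨f, hf, rfl⟩ := P.extMk_surjective α (n + 2) rfl
  exact (P.extMk_eq_zero_iff f (n + 2) rfl hf n rfl).mpr (hexact f hf)

lemma exists_comp_eq_of_subsingleton_ext {A : Type*} [Category* A] [Abelian A] [HasExt.{w} A]
    {X : A} {S : ShortComplex A} (hS : S.ShortExact) (h : Subsingleton (Abelian.Ext X S.X₁ 1))
    (g : X ⟶ S.X₃) : ∃ k : X ⟶ S.X₂, k ≫ S.g = g := by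
  obtain ⟨k, hk⟩ := Abelian.Ext.covariant_sequence_exact₃ X hS (Abelian.Ext.mk₀ g) (zero_add 1)
    (Subsingleton.elim _ _)
  obtain ⟨k, rfl⟩ := Abelian.Ext.mk₀_bijective _ _ |>.surjective k
  refine ⟨k, (Abelian.Ext.mk₀_bijective _ _).injective ?_⟩
  rw [← hk, Abelian.Ext.mk₀_comp_mk₀]

lemma exists_mkQ_comp_eq_of_subsingleton_ext {R : Type u} [Ring R] [Small.{v} R]
    {X M N : Type v} [AddCommGroup X] [AddCommGroup M] [AddCommGroup N]
    [Module R X] [Module R M] [Module R N] {f : M →ₗ[R] N} (hf : Function.Injective f)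
    (h : Subsingleton (Abelian.Ext (ModuleCat.of R X) (ModuleCat.of R M) 1))
    (g : X →ₗ[R] N ⧸ LinearMap.range f) : ∃ k : X →ₗ[R] N, (LinearMap.range f).mkQ ∘ₗ k = g := by
  let S := ModuleCat.shortComplexOfCompEqZero f (LinearMap.range f).mkQ (LinearMap.range_mkQ_comp f)
  have hS : S.ShortExact := ModuleCat.shortComplex_shortExact S
    (LinearMap.exact_map_mkQ_range f) hf (Submodule.mkQ_surjective _)
  obtain ⟨k, hk⟩ := exists_comp_eq_of_subsingleton_ext hS h (ModuleCat.ofHom g)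
  exact ⟨k.hom, congr(ModuleCat.Hom.hom $hk)⟩

end Ext

end OneSemidualizing

open OneSemidualizing

universe u in
theorem isReflexive_rank_one_of_one_semidualizing_general
    (R : Type u) [CommRing R] [IsNoetherianRing R] [IsDomain R] [IsIntegrallyClosed R]
    (C : Type u) [AddCommGroup C] [Module R C] [Module.Finite R C]
    (hhom : Function.Bijective (LinearMap.lsmul R C))
    (hext : Subsingleton (((Ext R (ModuleCat R) 1).obj
      (Opposite.op (ModuleCat.of R C))).obj (ModuleCat.of R C))) :
    Module.IsReflexive R C ∧
      Module.rank (FractionRing R) (FractionRing R ⊗[R] C) = 1 := by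
  constructor
  · exact isReflexive_of_forall_exists_lift hhom <|
      exists_mkQ_comp_eq_of_subsingleton_ext (eval_injective_of_bijective_lsmul hhom)
        (subsingleton_abelianExt_succ hext)
  · rw [rank_fractionRing_tensorProduct, rank_eq_one_of_bijective_lsmul hhom, Cardinal.lift_one]

theorem isReflexive_rank_one_of_one_semidualizing
    (R : Type) [CommRing R] [IsNoetherianRing R] [IsDomain R] [IsIntegrallyClosed R]
    (C : Type) [AddCommGroup C] [Module R C] [Module.Finite R C]
    (hhom : Function.Bijective (LinearMap.lsmul R C))
    (hext : Subsingleton (((Ext R (ModuleCat R) 1).obj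
      (Opposite.op (ModuleCat.of R C))).obj (ModuleCat.of R C))) :
    Module.IsReflexive R C ∧
      Module.rank (FractionRing R) (FractionRing R ⊗[R] C) = 1 :=
  isReflexive_rank_one_of_one_semidualizing_general R C hhom hext
end

section
/- Let R = k[X,Y,Z]/(XY − Z^n) with k a field of characteristic 0, n ≥ 2, and 0 < m < n. Then Ext^1_R((x,z^m),(x,z^m)) ≠ 0. Consequently, the only rank-1 reflexive module over R that is 1-semidualizing is R itself. -/
open CategoryTheory MvPolynomial

/-!
For nonvanishing of `Ext¹`, present `(x, zᵐ)` by two generators. Its syzygies `(s, t)` satisfy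
`x ∣ zᵐ t`, so for `q = max (2m - n) 0` the map `(s, t) ↦ z^q t` takes values in `(x, zᵐ)`. An
extension to `R²`, evaluated on the Koszul syzygy `(zᵐ, -x)`, would put `z^q` into `(x, y, zᵐ)`,
which is impossible since `q < m`.

For the classification, `R` is the intersection of `R[1/x]` and `R[1/y]`, which are localizations
of polynomial rings in two variables, hence unique factorization domains. A nonzero reflexive ideal
`J` is an intersection of principal fractional ideals, so it is determined by its greatest common
divisors `f` in `R[1/x]` and `g` in `R[1/y]`. Over `R[1/x, 1/y]` these agree up to a unit, so over
`R[1/y]` they agree up to units and powers of the prime `z`. Hence `J` is isomorphic to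
`zⁱ R[1/y] ∩ R` for some `i`; writing `i = ns + m` with `m < n`, this ideal is `xˢ (x, zᵐ)`, as `x`
and `zⁿ` differ by the unit `y` of `R[1/y]`.
-/

universe u v w

section ExtensionOfMaps

variable {R : Type u} [Ring R]

/-- Every homomorphism `ker q → N` extends to the source of `q`. -/
def KerMapsExtend {F M : Type*} [AddCommGroup F] [Module R F] [AddCommGroup M] [Module R M]
    (q : F →ₗ[R] M) (N : Type*) [AddCommGroup N] [Module R N] : Prop :=
  ∀ φ : LinearMap.ker q →ₗ[R] N, ∃ Φ : F →ₗ[R] N, ∀ w : LinearMap.ker q, Φ w = φ w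

lemma KerMapsExtend.of_comp_eq {F P M N : Type*} [AddCommGroup F] [Module R F] [AddCommGroup P]
    [Module R P] [AddCommGroup M] [Module R M] [AddCommGroup N] [Module R N]
    {ε : P →ₗ[R] M} {q : F →ₗ[R] M} (s : F →ₗ[R] P) (t : P →ₗ[R] F)
    (hs : ε ∘ₗ s = q) (ht : q ∘ₗ t = ε) (hε : KerMapsExtend ε N) : KerMapsExtend q N := by
  intro φ
  have hs' (f : F) : ε (s f) = q f := LinearMap.congr_fun hs f
  have ht' (p : P) : q (t p) = ε p := LinearMap.congr_fun ht p
  let tKer : LinearMap.ker ε →ₗ[R] LinearMap.ker q := t.restrict fun p hp => by simp_all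
  let defect : F →ₗ[R] LinearMap.ker q :=
    (LinearMap.id - t ∘ₗ s).codRestrict _ fun f => by simp [hs', ht']
  obtain ⟨Ψ, hΨ⟩ := hε (φ ∘ₗ tKer)
  refine ⟨Ψ ∘ₗ s + φ ∘ₗ defect, fun w => ?_⟩
  have hsw : s w ∈ LinearMap.ker ε := by simp [hs']
  have hsplit : tKer ⟨s w, hsw⟩ + defect w = w := by ext; simp [tKer, defect]
  calc Ψ (s w) + φ (defect w) = φ (tKer ⟨s w, hsw⟩) + φ (defect w) := by
        rw [hΨ ⟨s w, hsw⟩]; rfl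
    _ = φ w := by rw [← map_add, hsplit]

end ExtensionOfMaps

section Ext

variable {R : Type u} [CommRing R]

/-- `Extⁱ_R(M, N) = 0`. -/
abbrev ExtVanishes (R : Type u) [CommRing R] (i : ℕ) (M N : Type u) [AddCommGroup M] [Module R M]
    [AddCommGroup N] [Module R N] : Prop :=
  Subsingleton (((Ext R (ModuleCat R) i).obj (Opposite.op (ModuleCat.of R M))).obj
    (ModuleCat.of R N))

lemma kerMapsExtend_augmentation {M N : Type u} [AddCommGroup M] [Module R M] [AddCommGroup N]
    [Module R N] (P : ProjectiveResolution (ModuleCat.of R M))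
    (h : ExtVanishes R 1 M N) :
    KerMapsExtend (P.π.f 0).hom N := by
  have exact_hom : (P.complex.linearYonedaObj R (ModuleCat.of R N)).ExactAt 1 := by
    rw [HomologicalComplex.exactAt_iff_isZero_homology]
    exact (ModuleCat.isZero_of_subsingleton _).of_iso (P.isoExt 1 (ModuleCat.of R N)).symm
  rw [HomologicalComplex.exactAt_iff' _ 0 1 2 (by simp) (by simp),
    ShortComplex.moduleCat_exact_iff] at exact_hom
  intro φ
  let d : P.complex.X 1 →ₗ[R] LinearMap.ker (P.π.f 0).hom :=
    (P.complex.d 1 0).hom.codRestrict _ fun p => LinearMap.mem_ker.2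
      (congrArg (fun f => f.hom p) P.complex_d_comp_π_f_zero :)
  have cocycle : P.complex.d 2 1 ≫ ModuleCat.ofHom (φ ∘ₗ d) = 0 := by
    ext p
    have hdd : d ((P.complex.d 2 1).hom p) = 0 :=
      Subtype.ext (congrArg (fun f => f.hom p) (P.complex.d_comp_d 2 1 0))
    exact (congrArg φ hdd).trans (map_zero φ)
  obtain ⟨g, hg : P.complex.d 1 0 ≫ g = _⟩ := exact_hom _ cocycle
  refine ⟨g.hom, fun w => ?_⟩
  obtain ⟨p, hp⟩ := (ShortComplex.moduleCat_exact_iff _).1 P.exact₀ w.1 w.2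
  obtain rfl : d p = w := Subtype.ext hp
  exact congrArg (fun f => f.hom p) hg

theorem kerMapsExtend_of_extVanishes_one {M N F : Type u} [AddCommGroup M] [Module R M]
    [AddCommGroup N] [Module R N] [AddCommGroup F] [Module R F] [Module.Projective R F]
    (h : ExtVanishes R 1 M N) {q : F →ₗ[R] M} (hq : Function.Surjective q) : KerMapsExtend q N := by
  let P := ProjectiveResolution.of (ModuleCat.of R M)
  have : Module.Projective R (P.complex.X 0) :=
    (IsProjective.iff_projective _).2 (P.projective 0)
  let ε : P.complex.X 0 →ₗ[R] M := (P.π.f 0).hom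
  have hε : Function.Surjective ε := (ModuleCat.epi_iff_surjective (P.π.f 0)).1 inferInstance
  obtain ⟨t, ht⟩ := Module.projective_lifting_property q ε hq
  obtain ⟨s, hs⟩ := Module.projective_lifting_property ε q hε
  exact (kerMapsExtend_augmentation P h).of_comp_eq s t hs ht

lemma ExtVanishes.congr {M M' : Type u} [AddCommGroup M] [Module R M]
    [AddCommGroup M'] [Module R M'] (e : M ≃ₗ[R] M') (i : ℕ)
    (h : ExtVanishes R i M M) : ExtVanishes R i M' M' :=
  have e_fst := ((Ext R (ModuleCat R) i).mapIso e.toModuleIso.op).app (ModuleCat.of R M')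
  have e_snd := ((Ext R (ModuleCat R) i).obj (Opposite.op (ModuleCat.of R M))).mapIso
    e.symm.toModuleIso
  ⟨fun _ _ => (e_fst ≪≫ e_snd).toLinearEquiv.injective (h.elim _ _)⟩

/-- The presentation `(s, t) ↦ s * a + t * b` of the ideal generated by `a` and `b`. -/
noncomputable def spanPairMap (a b : R) : R × R →ₗ[R] Ideal.span {a, b} :=
  (LinearMap.coprod (LinearMap.toSpanSingleton R R a) (LinearMap.toSpanSingleton R R b)).codRestrict
    _ fun w => Ideal.mem_span_pair.2 ⟨w.1, w.2, rfl⟩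

@[simp]
lemma coe_spanPairMap (a b s t : R) : (spanPairMap a b (s, t) : R) = s * a + t * b := rfl

lemma spanPairMap_surjective (a b : R) : Function.Surjective (spanPairMap a b) := by
  rintro ⟨r, hr⟩
  obtain ⟨s, t, rfl⟩ := Ideal.mem_span_pair.1 hr
  exact ⟨(s, t), rfl⟩

theorem exists_mul_add_mul_eq_of_extVanishes_one {a b c : R}
    (h : ExtVanishes R 1 (Ideal.span {a, b}) (Ideal.span {a, b}))
    (hc : ∀ s t, s * a + t * b = 0 → c * t ∈ Ideal.span {a, b}) :
    ∃ u ∈ Ideal.span {a, b}, ∃ v ∈ Ideal.span {a, b},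
      ∀ s t, s * a + t * b = 0 → s * u + t * v = c * t := by
  have mem_ker {s t : R} : (s, t) ∈ LinearMap.ker (spanPairMap a b) ↔ s * a + t * b = 0 := by
    rw [LinearMap.mem_ker, Subtype.ext_iff, coe_spanPairMap, ZeroMemClass.coe_zero]
  let φ : LinearMap.ker (spanPairMap a b) →ₗ[R] Ideal.span {a, b} :=
    (c • LinearMap.snd R R R).restrict fun w hw => hc w.1 w.2 (mem_ker.1 hw)
  obtain ⟨Φ, hΦ⟩ := kerMapsExtend_of_extVanishes_one h (spanPairMap_surjective a b) φ
  refine ⟨Φ (1, 0), (Φ (1, 0)).2, Φ (0, 1), (Φ (0, 1)).2, fun s t hst => ?_⟩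
  have hsum : (s, t) = s • ((1, 0) : R × R) + t • ((0, 1) : R × R) := by simp
  have hΦst : (Φ (s, t) : R) = c * t := congrArg Subtype.val (hΦ ⟨(s, t), mem_ker.2 hst⟩)
  rw [← hΦst, hsum, map_add, map_smul, map_smul]
  rfl

end Ext

section MonomialIdeal

variable {k : Type v} [CommSemiring k] {σ : Type w} {i j l : σ} {a b : ℕ} {f : MvPolynomial σ k}

lemma mem_span_X_pow_pair :
    f ∈ Ideal.span {X i ^ a, X j ^ b} ↔ ∀ s ∈ f.support, a ≤ s i ∨ b ≤ s j := by
  have := mem_ideal_span_monomial_image (x := f) (s := {Finsupp.single i a, Finsupp.single j b})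
  simpa [Set.image_pair, ← X_pow_eq_monomial] using this

lemma mem_span_X_pow_pair_of_X_mul_mem (hli : l ≠ i) (hlj : l ≠ j)
    (hf : X l * f ∈ Ideal.span {X i ^ a, X j ^ b}) : f ∈ Ideal.span {X i ^ a, X j ^ b} := by
  rw [mem_span_X_pow_pair] at hf ⊢
  intro s hs
  have hls := hf (Finsupp.single l 1 + s) (by simpa [coeff_X_mul] using hs)
  rwa [Finsupp.add_apply, Finsupp.add_apply, Finsupp.single_eq_of_ne' hli,
    Finsupp.single_eq_of_ne' hlj, zero_add, zero_add] at hls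

end MonomialIdeal

lemma powers_X_le_nonZeroDivisors {k : Type v} [CommRing k] [IsDomain k] {σ : Type w} (i : σ) :
    Submonoid.powers (X i : MvPolynomial σ k) ≤ nonZeroDivisors (MvPolynomial σ k) :=
  powers_le_nonZeroDivisors_of_noZeroDivisors (X_ne_zero i)

/-- The images `x`, `y`, `z` of the variables in a presentation `R = k[X, Y, Z] / (XY - Zⁿ)` of the
`k`-algebra `R`. -/
structure IsASingularity (k : Type v) [CommRing k] {R : Type u} [CommRing R] [Algebra k R] (n : ℕ)
    (x y z : R) : Prop where
  surjective : Function.Surjective (aeval ![x, y, z] : MvPolynomial (Fin 3) k →ₐ[k] R)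
  ker_eq : RingHom.ker (aeval ![x, y, z] : MvPolynomial (Fin 3) k →ₐ[k] R) =
    Ideal.span {X 0 * X 1 - X 2 ^ n}

namespace IsASingularity

section Presentation

variable {k : Type v} [CommRing k] {R : Type u} [CommRing R] [Algebra k R] {n : ℕ} {x y z : R}

lemma mul_eq (h : IsASingularity k n x y z) : x * y = z ^ n := by
  have hrel := h.ker_eq.ge (Ideal.mem_span_singleton_self _)
  simpa [RingHom.mem_ker, sub_eq_zero] using hrel

lemma swap (h : IsASingularity k n x y z) : IsASingularity k n y x z := by
  let σ : MvPolynomial (Fin 3) k →ₐ[k] MvPolynomial (Fin 3) k := rename (Equiv.swap 0 1)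
  have hσσ (f) : σ (σ f) = f := by
    simp [σ, rename_rename, ← Equiv.coe_trans, Equiv.swap_swap]
  have haeval (f) : aeval ![y, x, z] f = aeval ![x, y, z] (σ f) := by
    rw [aeval_rename]
    congr 2
    ext i
    fin_cases i <;> rfl
  have hσrel : σ (X 0 * X 1 - X 2 ^ n) = X 0 * X 1 - X 2 ^ n := by
    have h2 : Equiv.swap (0 : Fin 3) 1 2 = 2 := rfl
    simp [σ, h2, mul_comm]
  constructor
  · intro r
    obtain ⟨f, rfl⟩ := h.surjective r
    exact ⟨σ f, by rw [haeval, hσσ]⟩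
  · ext f
    rw [RingHom.mem_ker, haeval, ← RingHom.mem_ker, h.ker_eq, Ideal.mem_span_singleton,
      Ideal.mem_span_singleton]
    refine ⟨fun hf => ?_, fun hf => ?_⟩
    · simpa only [hσσ, hσrel] using map_dvd σ hf
    · simpa only [hσrel] using map_dvd σ hf

/-- The homomorphism from `k[X, Y, Z] / (XY - Zⁿ)` given by a solution of `a * b = c ^ n`. -/
noncomputable def lift (h : IsASingularity k n x y z) {T : Type*} [CommRing T] [Algebra k T]
    {a b c : T} (habc : a * b = c ^ n) : R →ₐ[k] T :=
  AlgHom.liftOfSurjective _ h.surjective (aeval ![a, b, c]) (by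
    change RingHom.ker (aeval ![x, y, z] : MvPolynomial (Fin 3) k →ₐ[k] R) ≤ _
    rw [h.ker_eq, Ideal.span_singleton_le_iff_mem]
    simp [habc])

section Lift

variable (h : IsASingularity k n x y z) {T : Type*} [CommRing T] [Algebra k T]
    {a b c : T} (habc : a * b = c ^ n)

lemma lift_aeval (f : MvPolynomial (Fin 3) k) :
    h.lift habc (aeval ![x, y, z] f) = aeval ![a, b, c] f :=
  AlgHom.liftOfSurjective_apply _ h.surjective _ _ f

@[simp]
lemma lift_x : h.lift habc x = a := by
  simpa using h.lift_aeval habc (X 0)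

@[simp]
lemma lift_y : h.lift habc y = b := by
  simpa using h.lift_aeval habc (X 1)

@[simp]
lemma lift_z : h.lift habc z = c := by
  simpa using h.lift_aeval habc (X 2)

end Lift

lemma algHom_ext (h : IsASingularity k n x y z) {T : Type*} [Semiring T] [Algebra k T]
    {φ ψ : R →ₐ[k] T} (hx : φ x = ψ x) (hy : φ y = ψ y) (hz : φ z = ψ z) : φ = ψ := by
  rw [← AlgHom.cancel_right h.surjective]
  ext i
  fin_cases i <;> simpa

lemma mem_span_of_mul_mem_span (h : IsASingularity k n x y z) {m : ℕ} (hm : m ≤ n) {r : R}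
    (hr : y * r ∈ Ideal.span {x, z ^ m}) : r ∈ Ideal.span {x, z ^ m} := by
  obtain ⟨f, rfl⟩ := h.surjective r
  let I : Ideal (MvPolynomial (Fin 3) k) := Ideal.span {X 0 ^ 1, X 2 ^ m}
  have hker : RingHom.ker (aeval ![x, y, z]) ≤ I := by
    rw [h.ker_eq, Ideal.span_singleton_le_iff_mem]
    refine Ideal.sub_mem _ ?_ (Ideal.mem_of_dvd _ (pow_dvd_pow _ hm) (Ideal.subset_span (by simp)))
    exact Ideal.mul_mem_right _ _ (Ideal.subset_span (by simp))
  have hmem (g) : aeval ![x, y, z] g ∈ Ideal.span {x, z ^ m} ↔ g ∈ I := by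
    have hmap : Ideal.span {x, z ^ m} = I.map (aeval ![x, y, z]) := by
      simp [I, Ideal.map_span, Set.image_pair]
    rw [hmap, ← Ideal.mem_comap, Ideal.comap_map_of_surjective' _ h.surjective, sup_of_le_left hker]
  rw [hmem]
  refine mem_span_X_pow_pair_of_X_mul_mem (l := 1) (by decide) (by decide) ((hmem _).1 ?_)
  simpa using hr

lemma dvd_of_dvd_mul (h : IsASingularity k n x y z) (r : R) (hr : x ∣ y * r) : x ∣ r := by
  have hspan : Ideal.span {x, z ^ n} = Ideal.span {x} := by
    rw [← h.mul_eq, Ideal.span_pair_eq_span_left_iff_dvd]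
    exact dvd_mul_right x y
  rw [← Ideal.mem_span_singleton, ← hspan] at hr ⊢
  exact h.mem_span_of_mul_mem_span le_rfl hr

lemma pow_notMem_span [Nontrivial k] (h : IsASingularity k n x y z) {a m : ℕ} (ham : a < m)
    (hmn : m ≤ n) : z ^ a ∉ Ideal.span {x, y, z ^ m} := by
  intro hz
  let q := Ideal.Quotient.mk (Ideal.span {(Polynomial.X : Polynomial k) ^ m})
  have hq {i : ℕ} : q Polynomial.X ^ i = 0 ↔ m ≤ i := by
    rw [← map_pow, Ideal.Quotient.eq_zero_iff_mem, Ideal.mem_span_singleton,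
      Polynomial.X_pow_dvd_iff]
    simp only [Polynomial.coeff_X_pow, ite_eq_right_iff, one_ne_zero, imp_false]
    exact ⟨fun hi => not_lt.1 fun him => hi i him rfl, fun hi d hd => (hd.trans_le hi).ne⟩
  have hxyz : 0 * 0 = q Polynomial.X ^ n := by
    rw [hq.2 hmn, mul_zero]
  have hspan : Ideal.span {x, y, z ^ m} ≤ RingHom.ker (h.lift hxyz) := by
    rw [Ideal.span_le]
    rintro _ (rfl | rfl | rfl) <;> simp [RingHom.mem_ker, hq.2]
  have hqa := hspan hz
  rw [RingHom.mem_ker, map_pow, lift_z, hq] at hqa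
  exact ham.not_ge hqa

end Presentation

section Localization

variable {k : Type v} [CommRing k] {R : Type u} [CommRing R] [Algebra k R] {n : ℕ} {x y z : R}

lemma x_mem_nonZeroDivisors [IsDomain k] (h : IsASingularity k n x y z) :
    x ∈ nonZeroDivisors R := by
  rw [mem_nonZeroDivisors_iff_left]
  intro r hr
  obtain ⟨f, rfl⟩ := h.surjective r
  have mem_ker_iff (f : MvPolynomial (Fin 3) k) :
      aeval ![x, y, z] f = 0 ↔ X 0 * X 1 - X 2 ^ n ∣ f := by
    rw [← RingHom.mem_ker, h.ker_eq, Ideal.mem_span_singleton]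
  obtain ⟨g, hg⟩ := (mem_ker_iff (X 0 * f)).1 (by simpa using hr)
  have hdvd : X 0 ∣ X 2 ^ n * g := ⟨X 1 * g - f, by linear_combination hg⟩
  have hndvd : ¬ (X 0 : MvPolynomial (Fin 3) k) ∣ X 2 ^ n :=
    fun hX => absurd (X_dvd_X.1 (X_prime.dvd_of_dvd_pow hX)) (by decide)
  obtain ⟨g', rfl⟩ := (X_prime.dvd_or_dvd hdvd).resolve_left hndvd
  refine (mem_ker_iff f).2 ⟨g', mul_left_cancel₀ (X_ne_zero 0) ?_⟩
  linear_combination hg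

/-- Inverting `x` makes `y = zⁿ / x` superfluous: `R[1/x] = k[X, Z][1/X]`. -/
lemma exists_algEquiv_away (h : IsASingularity k n x y z)
    (A : Type*) [CommRing A] [Algebra R A] [Algebra k A] [IsScalarTower k R A]
    [IsLocalization.Away x A] (L : Type*) [CommRing L] [Algebra (MvPolynomial (Fin 2) k) L]
    [Algebra k L] [IsScalarTower k (MvPolynomial (Fin 2) k) L]
    [IsLocalization.Away (X 0 : MvPolynomial (Fin 2) k) L] :
    ∃ e : A ≃ₐ[k] L, e (algebraMap R A x) = algebraMap (MvPolynomial (Fin 2) k) L (X 0) ∧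
      e (algebraMap R A z) = algebraMap (MvPolynomial (Fin 2) k) L (X 1) := by
  let α := algebraMap R A
  let β := algebraMap (MvPolynomial (Fin 2) k) L
  have hX : IsUnit (β (X 0)) := IsLocalization.Away.algebraMap_isUnit _
  have hx : IsUnit (α x) := IsLocalization.Away.algebraMap_isUnit _
  have hXY : β (X 0) * (IsLocalization.Away.invSelf (X 0 : MvPolynomial (Fin 2) k) * β (X 1) ^ n) =
      β (X 1) ^ n := by
    rw [← mul_assoc, IsLocalization.Away.mul_invSelf, one_mul]
  let φ : R →ₐ[k] L := h.lift hXY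
  let ψ : MvPolynomial (Fin 2) k →ₐ[k] A := aeval ![α x, α z]
  have hφx : IsUnit (φ x) := by simpa [φ] using hX
  have hψX : IsUnit (ψ (X 0)) := by simpa [ψ] using hx
  let Φ : A →ₐ[k] L := IsLocalization.Away.liftAlgHom x hφx
  let Ψ : L →ₐ[k] A := IsLocalization.Away.liftAlgHom (X 0) hψX
  have hΦ (r) : Φ (α r) = φ r := IsLocalization.Away.lift_eq x hφx r
  have hΨ (p) : Ψ (β p) = ψ p := IsLocalization.Away.lift_eq (X 0) hψX p
  have hΨΦx : Ψ (Φ (α x)) = α x := by simp [hΦ, hΨ, φ, ψ]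
  have hΨΦz : Ψ (Φ (α z)) = α z := by simp [hΦ, hΨ, φ, ψ]
  have hΨΦy : Ψ (Φ (α y)) = α y := by
    apply hx.mul_left_cancel
    calc α x * Ψ (Φ (α y)) = Ψ (Φ (α (x * y))) := by simp only [map_mul, hΨΦx]
      _ = α (x * y) := by simp only [h.mul_eq, map_pow, hΨΦz]
      _ = α x * α y := map_mul α x y
  have hΨΦ : Ψ.comp Φ = AlgHom.id k A :=
    IsLocalization.algHom_ext (.powers x) (h.algHom_ext hΨΦx hΨΦy hΨΦz)
  have hΦΨ : Φ.comp Ψ = AlgHom.id k L := by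
    refine IsLocalization.algHom_ext (.powers (X 0 : MvPolynomial (Fin 2) k))
      (MvPolynomial.algHom_ext fun i => ?_)
    change Φ (Ψ (β (X i))) = β (X i)
    fin_cases i <;> simp [hΦ, hΨ, φ, ψ]
  exact ⟨AlgEquiv.ofAlgHom Φ Ψ hΦΨ hΨΦ, by simp [α, φ, hΦ, β]⟩

lemma uniqueFactorizationMonoid_away [UniqueFactorizationMonoid k] (h : IsASingularity k n x y z) :
    UniqueFactorizationMonoid (Localization.Away x) := by
  obtain ⟨e, -⟩ := h.exists_algEquiv_away (Localization.Away x)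
    (Localization.Away (X 0 : MvPolynomial (Fin 2) k))
  exact e.symm.toMulEquiv.uniqueFactorizationMonoid inferInstance

variable [IsDomain k]

lemma isDomain (h : IsASingularity k n x y z) : IsDomain R := by
  obtain ⟨e, -⟩ := h.exists_algEquiv_away (Localization.Away x)
    (Localization.Away (X 0 : MvPolynomial (Fin 2) k))
  have : IsDomain (Localization.Away (X 0 : MvPolynomial (Fin 2) k)) :=
    IsLocalization.isDomain_localization (powers_X_le_nonZeroDivisors 0)
  have hinj : Function.Injective (algebraMap R (Localization.Away x)) :=
    IsLocalization.injective _ (Submonoid.powers_le.2 h.x_mem_nonZeroDivisors)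
  exact (e.injective.comp hinj).isDomain (e.toRingHom.comp (algebraMap R _))

lemma isDomain_away (h : IsASingularity k n x y z) : IsDomain (Localization.Away x) :=
  have := h.isDomain
  IsLocalization.isDomain_localization (Submonoid.powers_le.2 h.x_mem_nonZeroDivisors)

lemma faithfulSMul_away (h : IsASingularity k n x y z) : FaithfulSMul R (Localization.Away x) :=
  (faithfulSMul_iff_algebraMap_injective _ _).2
    (IsLocalization.injective _ (Submonoid.powers_le.2 h.x_mem_nonZeroDivisors))

lemma algebraMap_away_ne_zero (h : IsASingularity k n x y z) {r : R} (hr : r ≠ 0) :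
    algebraMap R (Localization.Away x) r ≠ 0 :=
  have := h.faithfulSMul_away
  (FaithfulSMul.algebraMap_eq_zero_iff R _).not.2 hr

lemma prime_algebraMap_away (h : IsASingularity k n x y z) :
    Prime (algebraMap R (Localization.Away x) z) := by
  let L := Localization.Away (X 0 : MvPolynomial (Fin 2) k)
  obtain ⟨e, -, hez⟩ := h.exists_algEquiv_away (Localization.Away x) L
  rw [← MulEquiv.prime_iff e, hez]
  refine (IsLocalization.toLocalizationMap (.powers (X 0 : MvPolynomial (Fin 2) k)) L).map_prime
    X_prime ?_ ?_
  · have hinj := IsLocalization.injective L (powers_X_le_nonZeroDivisors (k := k) (0 : Fin 2))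
    exact (map_ne_zero_iff _ hinj).2 (X_ne_zero 1)
  · intro hunit
    obtain ⟨N, hN⟩ := (IsLocalization.Away.algebraMap_isUnit_iff (X 0)).1 hunit
    exact absurd (X_dvd_X.1 (X_prime.dvd_of_dvd_pow hN)) (by decide)

lemma x_ne_zero (h : IsASingularity k n x y z) : x ≠ 0 :=
  have := h.isDomain
  nonZeroDivisors.ne_zero h.x_mem_nonZeroDivisors

lemma z_ne_zero (h : IsASingularity k n x y z) : z ≠ 0 := by
  rintro rfl
  exact h.prime_algebraMap_away.ne_zero (map_zero _)

end Localization

section ExtNonvanishing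

variable {k : Type v} [CommRing k] [IsDomain k] {R : Type u} [CommRing R] [Algebra k R] {n : ℕ}
  {x y z : R}

lemma mem_span_of_dvd_pow_mul (h : IsASingularity k n x y z) {a : ℕ} {r : R}
    (hr : x ∣ z ^ a * r) : r ∈ Ideal.span {x, z ^ (n - a)} := by
  have := h.isDomain
  obtain hna | han := le_total n a
  · have hone : z ^ (n - a) = 1 := by rw [Nat.sub_eq_zero_of_le hna, pow_zero]
    exact Ideal.mem_of_dvd _ (hone ▸ one_dvd r) (Ideal.subset_span (by simp))
  obtain ⟨q, hq⟩ := hr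
  have hyr : y * r = z ^ (n - a) * q := by
    refine mul_left_cancel₀ (pow_ne_zero a h.z_ne_zero) ?_
    rw [← mul_assoc (z ^ a) (z ^ (n - a)), pow_mul_pow_sub z han]
    linear_combination y * hq + q * h.mul_eq
  refine h.mem_span_of_mul_mem_span (Nat.sub_le n a) ?_
  exact hyr ▸ Ideal.mul_mem_right _ _ (Ideal.subset_span (by simp))

lemma pow_mul_mem_span_of_syzygy (h : IsASingularity k n x y z) {m : ℕ} (s t : R)
    (hst : s * x + t * z ^ m = 0) : z ^ (2 * m - n) * t ∈ Ideal.span {x, z ^ m} := by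
  have hdvd : x ∣ z ^ m * t := ⟨-s, by linear_combination hst⟩
  obtain ⟨a, b, rfl⟩ := Ideal.mem_span_pair.1 (h.mem_span_of_dvd_pow_mul hdvd)
  refine Ideal.mem_span_pair.2 ⟨z ^ (2 * m - n) * a, b * z ^ (2 * m - n + (n - m) - m), ?_⟩
  have hexp : z ^ (2 * m - n + (n - m) - m) * z ^ m = z ^ (2 * m - n) * z ^ (n - m) := by
    rw [← pow_add, ← pow_add]
    congr 1
    lia
  linear_combination b * hexp

/-- The homomorphism that does not extend to the free module sends the syzygy `(s, t)` to
`z ^ (2 * m - n) * t`; truncated subtraction covers the case `2 * m ≤ n`. -/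
theorem not_extVanishes_one (h : IsASingularity k n x y z) {m : ℕ} (hm : 0 < m) (hmn : m < n) :
    ¬ ExtVanishes R 1 (Ideal.span {x, z ^ m}) (Ideal.span {x, z ^ m}) := by
  intro hext
  have := h.isDomain
  obtain ⟨u, hu, v, hv, huv⟩ :=
    exists_mul_add_mul_eq_of_extVanishes_one hext h.pow_mul_mem_span_of_syzygy
  have koszul : z ^ m * u + -x * v = z ^ (2 * m - n) * -x := huv (z ^ m) (-x) (by ring)
  obtain ⟨a, b, rfl⟩ := Ideal.mem_span_pair.1 hu
  have hdvd : x ∣ z ^ (2 * m) * b := ⟨v - z ^ m * a - z ^ (2 * m - n), by linear_combination koszul⟩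
  obtain ⟨b₁, b₂, rfl⟩ := Ideal.mem_span_pair.1 (h.mem_span_of_dvd_pow_mul hdvd)
  have hexp : z ^ (2 * m) * z ^ (n - 2 * m) = x * y * z ^ (2 * m - n) := by
    rw [h.mul_eq, ← pow_add, ← pow_add]
    congr 1
    lia
  have heq : z ^ (2 * m - n) =
      v - z ^ m * a - z ^ m * (z ^ m * b₁) - y * (b₂ * z ^ (2 * m - n)) := by
    refine mul_left_cancel₀ h.x_ne_zero ?_
    linear_combination koszul - b₂ * hexp
  refine h.pow_notMem_span (a := 2 * m - n) (by lia) hmn.le ?_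
  have hz : z ^ m ∈ Ideal.span {x, y, z ^ m} := Ideal.subset_span (by simp)
  have hv' : v ∈ Ideal.span {x, y, z ^ m} := Ideal.span_mono (by grind) hv
  rw [heq]
  exact sub_mem (sub_mem (sub_mem hv' (Ideal.mul_mem_right _ _ hz)) (Ideal.mul_mem_right _ _ hz))
    (Ideal.mul_mem_right _ _ (Ideal.subset_span (by simp)))

end ExtNonvanishing

end IsASingularity

section Divisorial

variable {R : Type u} [CommRing R] {J : Ideal R}

/-- The ideal `J` is the intersection of the principal fractional ideals `(d / c)` containing it. -/
def IsDivisorial (J : Ideal R) : Prop :=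
  ∀ h, (∀ c d, d ≠ 0 → (∀ j ∈ J, d ∣ c * j) → d ∣ c * h) → h ∈ J

lemma isDivisorial_of_isReflexive [IsDomain R] [Module.IsReflexive R J] (hJ : J ≠ ⊥) :
    IsDivisorial J := by
  intro h hh
  obtain ⟨j₀, hj₀, hj₀ne⟩ := Submodule.exists_mem_ne_zero_of_ne_bot hJ
  have exchange (f : Module.Dual R J) (j : J) : f ⟨j₀, hj₀⟩ * j = j₀ * f j := by
    have hsmul : (j : R) • (⟨j₀, hj₀⟩ : J) = j₀ • j := Subtype.ext (mul_comm (j : R) j₀)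
    rw [mul_comm, ← smul_eq_mul, ← map_smul, hsmul, map_smul, smul_eq_mul]
  have dvd (f : Module.Dual R J) : j₀ ∣ f ⟨j₀, hj₀⟩ * h :=
    hh _ _ hj₀ne fun j hj => ⟨f ⟨j, hj⟩, exchange f ⟨j, hj⟩⟩
  choose Φ hΦ using dvd
  let Φlin : Module.Dual R (Module.Dual R J) :=
    { toFun := Φ
      map_add' := fun f g => mul_left_cancel₀ hj₀ne <| by
        rw [← hΦ, mul_add, ← hΦ, ← hΦ, LinearMap.add_apply, add_mul]
      map_smul' := fun r f => mul_left_cancel₀ hj₀ne <| by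
        rw [← hΦ, LinearMap.smul_apply, smul_eq_mul, smul_eq_mul, mul_assoc, hΦ, RingHom.id_apply,
          mul_left_comm] }
  obtain ⟨j, hj⟩ := (Module.bijective_dual_eval R J).2 Φlin
  have hΦj : Φ J.subtype = j := (LinearMap.congr_fun hj J.subtype).symm
  have hhj : h = j := mul_left_cancel₀ hj₀ne ((hΦ J.subtype).trans (by rw [hΦj]))
  exact hhj ▸ j.2

section LocalGCD

variable (A : Type*) [CommRing A] [Algebra R A]

/-- After extension of scalars to `A`, the element `f` is a greatest common divisor of the ideal
`J`, and already of a finite subset of `J`; it remains one after multiplication by any `c`. -/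
structure IsLocalGCD (J : Ideal R) (f : R) : Prop where
  algebraMap_dvd : ∀ j ∈ J, algebraMap R A f ∣ algebraMap R A j
  exists_finset : ∃ S : Finset R, ↑S ⊆ (J : Set R) ∧ ∀ c d,
    (∀ j ∈ S, algebraMap R A d ∣ algebraMap R A (c * j)) → algebraMap R A d ∣ algebraMap R A (c * f)

lemma exists_isLocalGCD [UniqueFactorizationMonoid A] (M : Submonoid R)
    [IsLocalization M A] (J : Ideal R) : ∃ f, IsLocalGCD A J f := by
  classical
  let _ := UniqueFactorizationMonoid.strongNormalizationMonoid (α := A)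
  let _ := UniqueFactorizationMonoid.toNormalizedGCDMonoid A
  let α := algebraMap R A
  obtain ⟨_, ⟨S, hSJ, rfl⟩, hmin⟩ := (IsWellFounded.wf (r := DvdNotUnit (α := A))).has_min
    {a | ∃ S : Finset R, ↑S ⊆ (J : Set R) ∧ S.gcd α = a} ⟨_, ∅, by simp, rfl⟩
  have gcd_dvd (j) (hj : j ∈ J) : S.gcd α ∣ α j := by
    by_contra hndvd
    refine hmin _ ⟨insert j S, by simp [Set.insert_subset_iff, hj, hSJ], rfl⟩ ?_
    exact dvdNotUnit_of_dvd_of_not_dvd (Finset.gcd_mono (Finset.subset_insert j S))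
      fun h => hndvd (h.trans (Finset.gcd_dvd (Finset.mem_insert_self j S)))
  obtain ⟨⟨f, s⟩, hf⟩ := IsLocalization.surj M (S.gcd α)
  have hassoc : Associated (α f) (S.gcd α) :=
    hf ▸ associated_mul_unit_left _ _ (IsLocalization.map_units A s)
  refine ⟨f, fun j hj => hassoc.dvd.trans (gcd_dvd j hj), S, hSJ, fun c d h => ?_⟩
  have hgcd : α d ∣ S.gcd fun j => α c * α j := Finset.dvd_gcd fun j hj => map_mul α c j ▸ h j hj
  rw [map_mul]
  exact hgcd.trans ((Finset.gcd_mul_left' _ _ _).dvd.trans (mul_dvd_mul_left _ hassoc.symm.dvd))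

variable {A} {f : R}

lemma IsLocalGCD.dvd_mul (hf : IsLocalGCD A J f) {c d : R} (h : ∀ j ∈ J, d ∣ c * j) :
    algebraMap R A d ∣ algebraMap R A (c * f) :=
  have ⟨_, hSJ, hS⟩ := hf.exists_finset
  hS c d fun j hj => map_dvd _ (h j (hSJ hj))

lemma IsLocalGCD.ne_zero [FaithfulSMul R A] (hf : IsLocalGCD A J f) (hJ : J ≠ ⊥) : f ≠ 0 := by
  rintro rfl
  obtain ⟨j, hj, hjne⟩ := Submodule.exists_mem_ne_zero_of_ne_bot hJ
  exact hjne (by simpa using hf.algebraMap_dvd j hj)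

lemma algebraMap_away_dvd_iff (x : R) {a b : R} [IsLocalization.Away x A] :
    algebraMap R A a ∣ algebraMap R A b ↔ ∃ N : ℕ, a ∣ x ^ N * b := by
  refine (IsLocalization.toLocalizationMap (.powers x) A).map_dvd_map.trans ?_
  simp [Submonoid.mem_powers_iff]

lemma IsLocalGCD.exists_dvd_pow_mul {x : R} [IsLocalization.Away x A] (hf : IsLocalGCD A J f)
    {B : Type*} [CommRing B] [Algebra R B] {g : R} (hg : IsLocalGCD B J g) :
    ∃ N : ℕ, algebraMap R B f ∣ algebraMap R B (x ^ N * g) := by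
  obtain ⟨S, hSJ, hS⟩ := hg.exists_finset
  have hfS (j) (hj : j ∈ S) : ∃ N : ℕ, f ∣ x ^ N * j :=
    (algebraMap_away_dvd_iff x).1 (hf.algebraMap_dvd j (hSJ hj))
  choose! N hN using hfS
  exact ⟨S.sup N, hS _ _ fun j hj => map_dvd _
    ((hN j hj).trans (mul_dvd_mul_right (pow_dvd_pow x (Finset.le_sup hj)) j))⟩

end LocalGCD

section TwoLocalizations

variable [IsDomain R] {x y : R}

lemma pow_dvd_of_pow_dvd_pow_mul (hxy : ∀ r, x ∣ y * r → x ∣ r) (hx : x ≠ 0) {M N : ℕ} {r : R}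
    (h : x ^ N ∣ y ^ M * r) : x ^ N ∣ r := by
  have hxyM (M : ℕ) : ∀ r, x ∣ y ^ M * r → x ∣ r := by
    induction M with
    | zero => simp
    | succ M ih => exact fun r hr => ih r (hxy _ (by rwa [← mul_assoc, ← pow_succ']))
  induction N generalizing r with
  | zero => simp
  | succ N ih =>
    obtain ⟨r, rfl⟩ := hxyM M r ((dvd_pow_self x N.succ_ne_zero).trans h)
    rw [pow_succ', mul_left_comm, mul_dvd_mul_iff_left hx] at h
    exact pow_succ' x N ▸ mul_dvd_mul_left x (ih h)

variable (A B : Type*) [CommRing A] [Algebra R A] [IsLocalization.Away x A] [CommRing B]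
  [Algebra R B] [IsLocalization.Away y B]

lemma dvd_of_algebraMap_away_dvd (hxy : ∀ r, x ∣ y * r → x ∣ r) (hx : x ≠ 0) {a b : R}
    (hA : algebraMap R A a ∣ algebraMap R A b) (hB : algebraMap R B a ∣ algebraMap R B b) :
    a ∣ b := by
  obtain ⟨N, p, hp⟩ := (algebraMap_away_dvd_iff x).1 hA
  obtain ⟨M, q, hq⟩ := (algebraMap_away_dvd_iff y).1 hB
  obtain rfl | ha := eq_or_ne a 0
  · simpa [hx] using hp
  have hpq : y ^ M * p = x ^ N * q :=
    mul_left_cancel₀ ha (by linear_combination x ^ N * hq - y ^ M * hp)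
  obtain ⟨p, rfl⟩ := pow_dvd_of_pow_dvd_pow_mul hxy hx ⟨q, hpq⟩
  exact ⟨p, mul_left_cancel₀ (pow_ne_zero N hx) (by rw [hp, mul_left_comm])⟩

variable {A B}

lemma IsDivisorial.mem_iff (hJ : IsDivisorial J) (hxy : ∀ r, x ∣ y * r → x ∣ r) (hx : x ≠ 0)
    {f g : R} (hf : IsLocalGCD A J f) (hg : IsLocalGCD B J g) {h : R} :
    h ∈ J ↔ algebraMap R A f ∣ algebraMap R A h ∧ algebraMap R B g ∣ algebraMap R B h := by
  refine ⟨fun hh => ⟨hf.algebraMap_dvd h hh, hg.algebraMap_dvd h hh⟩,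
    fun ⟨hfh, hgh⟩ => hJ h fun c d _ hcd => dvd_of_algebraMap_away_dvd A B hxy hx ?_ ?_⟩
  · refine (hf.dvd_mul hcd).trans ?_
    simpa only [map_mul] using mul_dvd_mul_left _ hfh
  · refine (hg.dvd_mul hcd).trans ?_
    simpa only [map_mul] using mul_dvd_mul_left _ hgh

end TwoLocalizations

lemma nonempty_linearEquiv_of_span_singleton_mul_eq [IsDomain R] {I J : Ideal R} {a b : R}
    (ha : a ≠ 0) (hb : b ≠ 0) (h : Ideal.span {a} * I = Ideal.span {b} * J) :
    Nonempty (I ≃ₗ[R] J) := by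
  have map_mul_left (c : R) (K : Ideal R) :
      Submodule.map (LinearMap.mulLeft R c) K = Ideal.span {c} * K := by
    ext
    simp [Ideal.mem_span_singleton_mul]
  have hmap :
      Submodule.map (LinearMap.mulLeft R a) I = Submodule.map (LinearMap.mulLeft R b) J := by
    rw [map_mul_left, map_mul_left, h]
  exact ⟨Submodule.equivMapOfInjective _ (mul_right_injective₀ ha) I ≪≫ₗ LinearEquiv.ofEq _ _ hmap
    ≪≫ₗ (Submodule.equivMapOfInjective _ (mul_right_injective₀ hb) J).symm⟩

end Divisorial

section SymbolicPower

variable {R : Type u} [CommRing R]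

/-- The contraction `zⁱ R[1/y] ∩ R`. If `R = k[x, y, z] / (xy - zⁿ)`, then this is the `i`-th
symbolic power of the prime ideal `(x, z)`. -/
def symbolicPower (y z : R) (i : ℕ) : Ideal R :=
  (Ideal.span {algebraMap R (Localization.Away y) z ^ i}).comap
    (algebraMap R (Localization.Away y))

lemma mem_symbolicPower {y z : R} {i : ℕ} {r : R} : r ∈ symbolicPower y z i ↔
    algebraMap R (Localization.Away y) z ^ i ∣ algebraMap R (Localization.Away y) r :=
  Ideal.mem_span_singleton

end SymbolicPower

namespace IsASingularity

section Classification

variable {k : Type v} [CommRing k] {R : Type u} [CommRing R] [Algebra k R] {n : ℕ} {x y z : R}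

lemma associated_algebraMap_away (h : IsASingularity k n x y z) :
    Associated (algebraMap R (Localization.Away y) x)
      (algebraMap R (Localization.Away y) z ^ n) := by
  rw [← map_pow, ← h.mul_eq, map_mul]
  exact (associated_mul_unit_left _ _ (IsLocalization.Away.algebraMap_isUnit y)).symm

lemma symbolicPower_eq_span (h : IsASingularity k n x y z) {m : ℕ} (hm : m ≤ n) :
    symbolicPower y z m = Ideal.span {x, z ^ m} := by
  refine le_antisymm (fun r hr => ?_) (Ideal.span_le.2 ?_)
  · rw [mem_symbolicPower, ← map_pow, algebraMap_away_dvd_iff y] at hr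
    obtain ⟨N, hN⟩ := hr
    have hmem : y ^ N * r ∈ Ideal.span {x, z ^ m} :=
      Ideal.mem_of_dvd _ hN (Ideal.subset_span (by simp))
    clear hN
    induction N with
    | zero => simpa using hmem
    | succ N ih =>
      refine ih (h.mem_span_of_mul_mem_span hm ?_)
      rwa [← mul_assoc, ← pow_succ']
  · rintro _ (rfl | rfl)
    · exact mem_symbolicPower.2 ((pow_dvd_pow _ hm).trans h.associated_algebraMap_away.symm.dvd)
    · exact mem_symbolicPower.2 (map_pow (algebraMap R _) z m).symm.dvd

variable [IsDomain k]

lemma symbolicPower_mul_add (h : IsASingularity k n x y z) (s m : ℕ) :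
    symbolicPower y z (n * s + m) = Ideal.span {x ^ s} * symbolicPower y z m := by
  have := h.isDomain
  have := h.swap.isDomain_away
  let β := algebraMap R (Localization.Away y)
  have hβx : β (x ^ s) ≠ 0 := h.swap.algebraMap_away_ne_zero (pow_ne_zero s h.x_ne_zero)
  have hβz : Associated (β z ^ (n * s + m)) (β (x ^ s) * β z ^ m) := by
    rw [pow_add, pow_mul, map_pow]
    exact (h.associated_algebraMap_away.symm.pow_pow).mul_right _
  have hmem (r) : x ^ s * r ∈ symbolicPower y z (n * s + m) ↔ r ∈ symbolicPower y z m := by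
    rw [mem_symbolicPower, mem_symbolicPower, map_mul, hβz.dvd_iff_dvd_left,
      mul_dvd_mul_iff_left hβx]
  refine (Ideal.eq_span_singleton_mul _ _).2 ⟨fun r hr => ?_, fun r hr => (hmem r).2 hr⟩
  have hxr : β (x ^ s) ∣ β r := (dvd_of_mul_right_dvd hβz.symm.dvd).trans (mem_symbolicPower.1 hr)
  obtain ⟨N, hN⟩ := (algebraMap_away_dvd_iff y).1 hxr
  obtain ⟨r, rfl⟩ := pow_dvd_of_pow_dvd_pow_mul h.dvd_of_dvd_mul h.x_ne_zero hN
  exact ⟨r, (hmem r).1 hr, rfl⟩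

lemma exists_associated_pow_mul (h : IsASingularity k n x y z) {J : Ideal R} (hJ : J ≠ ⊥) {f g : R}
    (hf : IsLocalGCD (Localization.Away x) J f) (hg : IsLocalGCD (Localization.Away y) J g) :
    ∃ N i : ℕ, Associated (algebraMap R (Localization.Away y) (x ^ N * g))
      (algebraMap R (Localization.Away y) (f * z ^ i)) := by
  have := h.isDomain
  have := h.swap.isDomain_away
  have := h.faithfulSMul_away
  let β := algebraMap R (Localization.Away y)
  have hβf : β f ≠ 0 := h.swap.algebraMap_away_ne_zero (hf.ne_zero hJ)
  have hβy : IsUnit (β y) := IsLocalization.Away.algebraMap_isUnit y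
  obtain ⟨N, s, hs : β (x ^ N * g) = β f * s⟩ := hf.exists_dvd_pow_mul (x := x) hg
  obtain ⟨M, hM⟩ := hg.exists_dvd_pow_mul (x := y) hf
  obtain ⟨L, hL⟩ := (algebraMap_away_dvd_iff x).1 hM
  have hgf : β g ∣ β x ^ L * β f := by
    have hg_dvd := map_dvd β hL
    rwa [map_mul, map_mul, map_pow, map_pow, mul_left_comm,
      (hβy.pow M).dvd_mul_left] at hg_dvd
  have hs_dvd : s ∣ β z ^ (n * (N + L)) := by
    have hsx : s ∣ β x ^ (N + L) := by
      rw [← mul_dvd_mul_iff_left hβf, ← hs, map_mul, map_pow, pow_add, mul_left_comm,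
        mul_comm (β f)]
      exact mul_dvd_mul_left _ hgf
    rw [pow_mul]
    exact hsx.trans h.associated_algebraMap_away.pow_pow.dvd
  obtain ⟨i, -, hi⟩ := (dvd_prime_pow h.swap.prime_algebraMap_away _).1 hs_dvd
  refine ⟨N, i, ?_⟩
  change Associated (β _) (β _)
  rw [hs, map_mul, map_pow]
  exact hi.mul_left _

lemma mem_iff_mem_symbolicPower (h : IsASingularity k n x y z) {J : Ideal R} (hJ : IsDivisorial J)
    {f g : R} (hf0 : f ≠ 0) (hf : IsLocalGCD (Localization.Away x) J f)
    (hg : IsLocalGCD (Localization.Away y) J g) {N i : ℕ}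
    (hfg : Associated (algebraMap R (Localization.Away y) (x ^ N * g))
      (algebraMap R (Localization.Away y) (f * z ^ i)))
    {j r : R} (hjr : x ^ N * j = f * r) : j ∈ J ↔ r ∈ symbolicPower y z i := by
  have := h.isDomain
  have := h.swap.isDomain_away
  let α := algebraMap R (Localization.Away x)
  let β := algebraMap R (Localization.Away y)
  have hβx : β (x ^ N) ≠ 0 := h.swap.algebraMap_away_ne_zero (pow_ne_zero N h.x_ne_zero)
  have hβf : β f ≠ 0 := h.swap.algebraMap_away_ne_zero hf0
  have hαx : IsUnit (α (x ^ N)) :=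
    map_pow α x N ▸ (IsLocalization.Away.algebraMap_isUnit x).pow N
  have hαj : α f ∣ α j := by
    rw [← hαx.dvd_mul_left, ← map_mul, hjr, map_mul]
    exact dvd_mul_right _ _
  calc j ∈ J ↔ β g ∣ β j := by
        rw [hJ.mem_iff h.dvd_of_dvd_mul h.x_ne_zero hf hg, and_iff_right hαj]
    _ ↔ β (x ^ N * g) ∣ β (x ^ N * j) := by
        rw [map_mul, map_mul, mul_dvd_mul_iff_left hβx]
    _ ↔ β (f * z ^ i) ∣ β (f * r) := by
        rw [hjr, hfg.dvd_iff_dvd_left]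
    _ ↔ r ∈ symbolicPower y z i := by
        rw [map_mul, map_mul, mul_dvd_mul_iff_left hβf, map_pow, mem_symbolicPower]

lemma exists_span_mul_eq_span_mul_symbolicPower [UniqueFactorizationMonoid k]
    (h : IsASingularity k n x y z) {J : Ideal R} (hJ : IsDivisorial J) (hne : J ≠ ⊥) :
    ∃ (N i : ℕ) (f : R), f ≠ 0 ∧
      Ideal.span {x ^ N} * J = Ideal.span {f} * symbolicPower y z i := by
  have := h.isDomain
  have := h.faithfulSMul_away
  have := h.uniqueFactorizationMonoid_away
  have := h.swap.uniqueFactorizationMonoid_away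
  obtain ⟨f, hf⟩ := exists_isLocalGCD (Localization.Away x) (.powers x) J
  obtain ⟨g, hg⟩ := exists_isLocalGCD (Localization.Away y) (.powers y) J
  obtain ⟨N, i, hfg⟩ := h.exists_associated_pow_mul hne hf hg
  have hf0 : f ≠ 0 := hf.ne_zero hne
  have mem_iff {j r : R} := h.mem_iff_mem_symbolicPower (j := j) (r := r) hJ hf0 hf hg hfg
  have dvd_of_dvd {a b : R} := dvd_of_algebraMap_away_dvd (a := a) (b := b)
    (Localization.Away x) (Localization.Away y) h.dvd_of_dvd_mul h.x_ne_zero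
  refine ⟨N, i, f, hf0, (Ideal.span_singleton_mul_eq_span_singleton_mul _ _).2
    ⟨fun j hj => ?_, fun r hr => ?_⟩⟩
  · have hfj : f ∣ x ^ N * j := by
      refine dvd_of_dvd ?_ ?_
      · rw [map_mul]
        exact (hf.algebraMap_dvd j hj).mul_left _
      · refine (map_dvd _ (dvd_mul_right f (z ^ i))).trans (hfg.symm.dvd.trans ?_)
        rw [map_mul, map_mul]
        exact mul_dvd_mul_left _ (hg.algebraMap_dvd j hj)
    obtain ⟨r, hr⟩ := hfj
    exact ⟨r, (mem_iff hr).1 hj, hr⟩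
  · have hxr : x ^ N ∣ f * r := by
      refine dvd_of_dvd ?_ ?_
      · rw [map_pow]
        exact ((IsLocalization.Away.algebraMap_isUnit x).pow N).dvd
      · refine (map_dvd _ (dvd_mul_right (x ^ N) g)).trans (hfg.dvd.trans ?_)
        rw [map_mul, map_mul, map_pow]
        exact mul_dvd_mul_left _ (mem_symbolicPower.1 hr)
    obtain ⟨j, hj⟩ := hxr
    exact ⟨j, (mem_iff hj.symm).2 hr, hj.symm⟩

theorem exists_linearEquiv_span [UniqueFactorizationMonoid k] (h : IsASingularity k n x y z)
    (hn : n ≠ 0) {J : Ideal R} (hJ : IsDivisorial J) (hne : J ≠ ⊥) :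
    ∃ m < n, Nonempty (J ≃ₗ[R] Ideal.span {x, z ^ m}) := by
  have := h.isDomain
  obtain ⟨N, i, f, hf, hJf⟩ := h.exists_span_mul_eq_span_mul_symbolicPower hJ hne
  have hi : i % n < n := Nat.mod_lt i (Nat.pos_of_ne_zero hn)
  refine ⟨i % n, hi, nonempty_linearEquiv_of_span_singleton_mul_eq (pow_ne_zero N h.x_ne_zero)
    (mul_ne_zero hf (pow_ne_zero (i / n) h.x_ne_zero)) ?_⟩
  rw [hJf, ← Ideal.span_singleton_mul_span_singleton, mul_assoc, ← h.symbolicPower_eq_span hi.le,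
    ← h.symbolicPower_mul_add, Nat.div_add_mod]

end Classification

lemma exists_algebra_of_ringEquiv {k : Type v} [CommRing k] {R : Type u} [CommRing R] {n : ℕ}
    (e : (MvPolynomial (Fin 3) k ⧸
      Ideal.span {(X 0 : MvPolynomial (Fin 3) k) * X 1 - X 2 ^ n}) ≃+* R) :
    ∃ _ : Algebra k R, IsASingularity k n (e (Ideal.Quotient.mk _ (X 0)))
      (e (Ideal.Quotient.mk _ (X 1))) (e (Ideal.Quotient.mk _ (X 2))) := by
  let I := Ideal.span {(X 0 : MvPolynomial (Fin 3) k) * X 1 - X 2 ^ n}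
  let _ : Algebra k R := (e.toRingHom.comp (algebraMap k _)).toAlgebra
  let e' : (MvPolynomial (Fin 3) k ⧸ I) ≃ₐ[k] R := AlgEquiv.ofRingEquiv (f := e) fun _ => rfl
  have haeval : aeval ![e (Ideal.Quotient.mk _ (X 0)), e (Ideal.Quotient.mk _ (X 1)),
      e (Ideal.Quotient.mk _ (X 2))] = e'.toAlgHom.comp (Ideal.Quotient.mkₐ k I) := by
    ext i
    fin_cases i <;> exact aeval_X _ _
  refine ⟨inferInstance, ?_, ?_⟩
  · rw [haeval]
    exact e.surjective.comp Ideal.Quotient.mk_surjective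
  · rw [haeval]
    ext f
    exact (map_eq_zero_iff e e.injective).trans Ideal.Quotient.eq_zero_iff_mem

end IsASingularity

theorem ext_one_ne_zero_and_trivial_one_semidualizing_general {k : Type v} [CommRing k] [IsDomain k]
    [UniqueFactorizationMonoid k] {n : ℕ} (hn : n ≠ 0) {R : Type u} [CommRing R] [Algebra k R]
    {x y z : R} (h : IsASingularity k n x y z) :
    (∀ m, 0 < m → m < n → ¬ ExtVanishes R 1 (Ideal.span {x, z ^ m}) (Ideal.span {x, z ^ m})) ∧
    ∀ (C : Type u) [AddCommGroup C] [Module R C] [Module.IsReflexive R C],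
      (∃ I : Ideal R, I ≠ ⊥ ∧ Nonempty (C ≃ₗ[R] I)) → ExtVanishes R 1 C C →
      Nonempty (C ≃ₗ[R] R) := by
  have := h.isDomain
  refine ⟨fun m => h.not_extVanishes_one, fun C _ _ _ ⟨I, hI, ⟨e⟩⟩ hC => ?_⟩
  have : Module.IsReflexive R I := Module.equiv e
  obtain ⟨m, hmn, ⟨e'⟩⟩ := h.exists_linearEquiv_span hn (isDivisorial_of_isReflexive hI) hI
  obtain rfl | hm := m.eq_zero_or_pos
  · have htop : Ideal.span {x, z ^ 0} = ⊤ :=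
      Ideal.eq_top_of_isUnit_mem _ (Ideal.subset_span (by simp)) isUnit_one
    exact ⟨e ≪≫ₗ e' ≪≫ₗ LinearEquiv.ofEq _ _ htop ≪≫ₗ Submodule.topEquiv⟩
  · exact absurd (hC.congr (e ≪≫ₗ e')) (h.not_extVanishes_one hm hmn)

/-- In `R = k[X,Y,Z]/(XY - Zⁿ)` (char k = 0, n ≥ 2), `Ext¹_R((x,zᵐ),(x,zᵐ)) ≠ 0` for all
`0 < m < n`.  Consequently the only finitely generated rank-one reflexive (i.e. isomorphic to
a nonzero ideal and reflexive) `R`-module `C` with `Hom_R(C,C) ≅ R` naturally and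
`Ext¹_R(C,C) = 0` is `R` itself. -/
theorem ext_one_ne_zero_and_trivial_one_semidualizing
    (k : Type) [Field k] [CharZero k] (n : ℕ) (hn : 2 ≤ n)
    (R : Type) [CommRing R]
    (e : (MvPolynomial (Fin 3) k ⧸
        Ideal.span {(X 0 : MvPolynomial (Fin 3) k) * X 1 - X 2 ^ n}) ≃+* R)
    (x y z : R)
    (hx : x = e (Ideal.Quotient.mk _ (X 0))) (hy : y = e (Ideal.Quotient.mk _ (X 1)))
    (hz : z = e (Ideal.Quotient.mk _ (X 2))) :
    (∀ m : ℕ, 0 < m → m < n →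
      ¬ Subsingleton (((Ext R (ModuleCat R) 1).obj
          (Opposite.op (ModuleCat.of R (Ideal.span {x, z ^ m})))).obj
        (ModuleCat.of R (Ideal.span {x, z ^ m})))) ∧
    (∀ (C : Type) (_ : AddCommGroup C) (_ : Module R C) (_ : Module.Finite R C),
      Module.IsReflexive R C →
      (∃ I : Ideal R, I ≠ ⊥ ∧ Nonempty (C ≃ₗ[R] I)) →
      Function.Bijective (LinearMap.lsmul R C) →
      Subsingleton (((Ext R (ModuleCat R) 1).obj
        (Opposite.op (ModuleCat.of R C))).obj (ModuleCat.of R C)) →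
      Nonempty (C ≃ₗ[R] R)) := by
  subst hx hy hz
  obtain ⟨_, h⟩ := IsASingularity.exists_algebra_of_ringEquiv e
  obtain ⟨hExt, hC⟩ := ext_one_ne_zero_and_trivial_one_semidualizing_general (by lia) h
  exact ⟨hExt, fun C _ _ _ _ hI _ => hC C hI⟩
end
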